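/- (Lemma 3: energy estimate.) Under the assumptions of the context, there exists a constant C > 0, depending on n, T, M, δ₀, D, p₁, H and R but not on y, f and t, such that for every t ∈ [0,T]: (∫_D |∂_t y(x,t)|² dx)^{1/2} ≤ C ( (∫_D |f(x)|² dx)^{1/2} + d₋ ), where d₋ := ( Σ_{i=1,2} ∫₀^T ∫_{B_{ρ₁}} 1_{⟨H(G_i(x')), ν_i(x')⟩ ≤ 0} |∂_t y(G_i(x'), t)|² ω_i(x') dx' dt )^{1/2} is the L² norm of ∂_t y over the inflow part {x ∈ ∂D : ⟨H(x), ν(x)⟩ ≤ 0} × (0,T) of the lateral boundary. -/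

import Mathlib

noncomputable section

open MeasureTheory Metric Set
open scoped RealInnerProductSpace

abbrev Esp (n : ℕ) : Type := EuclideanSpace ℝ (Fin n)

/-- The point `(x', xₙ) ∈ ℝ^{d+1} = ℝ^d × ℝ`. -/
noncomputable def graphMk (d : ℕ) (x' : Esp d) (xn : ℝ) : Esp (d+1) :=
  (EuclideanSpace.equiv (Fin (d+1)) ℝ).symm
    (Fin.snoc (⇑(EuclideanSpace.equiv (Fin d) ℝ) x') xn)

/-- `H` is `(M, δ₀)`-admissible on the compact set `K`. -/
def IsAdmissible {n : ℕ} (M δ₀ : ℝ) (K : Set (Esp n)) (H : Esp n → Esp n) : Prop :=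
  ∃ U : Set (Esp n), IsOpen U ∧ Convex ℝ U ∧ K ⊆ U ∧ ContDiffOn ℝ 1 H U ∧
    (∀ x ∈ U, ‖H x‖ ≤ M) ∧ (∀ x ∈ U, ‖fderiv ℝ H x‖ ≤ M) ∧ (∀ x ∈ K, δ₀ < ‖H x‖)

/-- `ψ_H(x) = ⟨x, H(x)⟩`. -/
noncomputable def psiW {n : ℕ} (H : Esp n → Esp n) (x : Esp n) : ℝ := ⟪x, H x⟫

/-- The Carleman weight `φ_H(x,t) = -βt + ψ_H(x)`. -/
noncomputable def phiW {n : ℕ} (β : ℝ) (H : Esp n → Esp n) (x : Esp n) (t : ℝ) : ℝ :=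
  -(β * t) + psiW H x

/-- Outward unit normal `ν₁` of the upper graph `xₙ = ℓ(x')`. -/
noncomputable def nuUp (d : ℕ) (ℓ : Esp d → ℝ) (x' : Esp d) : Esp (d+1) :=
  (Real.sqrt (1 + ‖gradient ℓ x'‖ ^ 2))⁻¹ • graphMk d (-(gradient ℓ x')) 1

/-- Outward unit normal `ν₂` of the lower graph `xₙ = m(x')`. -/
noncomputable def nuDown (d : ℕ) (m : Esp d → ℝ) (x' : Esp d) : Esp (d+1) :=
  (Real.sqrt (1 + ‖gradient m x'‖ ^ 2))⁻¹ • graphMk d (gradient m x') (-1)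

/-- Area element `ω(x') = √(1 + |∇m(x')|²)` of the graph of `m`. -/
noncomputable def omegaW (d : ℕ) (m : Esp d → ℝ) (x' : Esp d) : ℝ :=
  Real.sqrt (1 + ‖gradient m x'‖ ^ 2)

/-- The graph domain `D = {(x', xₙ) : |x'| < ρ₁, ℓ(x') − ℓ̃(x') < xₙ < ℓ(x')}`. -/
def graphDomain (d : ℕ) (ρ₁ : ℝ) (ℓ ℓt : Esp d → ℝ) : Set (Esp (d+1)) :=
  {x | ∃ x' : Esp d, ∃ xn : ℝ, ‖x'‖ < ρ₁ ∧ ℓ x' - ℓt x' < xn ∧ xn < ℓ x' ∧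
    x = graphMk d x' xn}

/-!
The time derivative `v = ∂_t y` solves the transport equation differentiated in time,
`∂_t v + ⟨H, ∇v⟩ + p v = (∂_t R) f`, with initial value `v(·, 0) = R(·, 0) f`. For `Λ` large the
damped square `Q = e^{-Λt} v²` satisfies `∂_t Q + ⟨H, ∇Q⟩ ≤ F - κ Q`, where `κ` bounds `div H` and
`F = k² f²` bounds the squared source. Multiply by a cutoff `χ_ε` that vanishes near the boundary
graphs, and integrate by parts: apart from the flux term `∫ ⟨H, ∇χ_ε⟩ Q`, everything is bounded by
`F` and the initial value, the term `-κ Q` absorbing `div H`. As `ε → 0` the measure `∇χ_ε dx`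
concentrates on the two graphs, so the flux term tends to minus the outward flux of `Q H`, which is
at most `sup |H|` times the integral of `Q` over the inflow part. Undoing the exponential weight
gives the estimate. Only `∂_t y` is controlled up to the boundary, so all integrations by parts take
place inside `D`.
-/

open Filter Topology

section Divergence

variable {E : Type*} [NormedAddCommGroup E] [NormedSpace ℝ E]

/-- The divergence of a vector field on a finite-dimensional space, as the trace of its
derivative. -/
def divergence (X : E → E) (x : E) : ℝ := LinearMap.trace ℝ E (fderiv ℝ X x)

theorem divergence_smul [FiniteDimensional ℝ E] {g : E → ℝ} {X : E → E} {x : E}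
    (hg : DifferentiableAt ℝ g x) (hX : DifferentiableAt ℝ X x) :
    divergence (fun z => g z • X z) x = g x * divergence X x + fderiv ℝ g x (X x) := by
  rw [divergence, fderiv_fun_smul hg hX]
  simp [divergence]

theorem continuous_divergence [FiniteDimensional ℝ E] {X : E → E} (hX : ContDiff ℝ 1 X) :
    Continuous (divergence X) :=
  ((LinearMap.trace ℝ E).comp (ContinuousLinearMap.coeLM ℝ)).continuous_of_finiteDimensional.comp
    (hX.continuous_fderiv one_ne_zero)

theorem hasCompactSupport_divergence {X : E → E} (hX : HasCompactSupport X) :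
    HasCompactSupport (divergence X) :=
  (hX.fderiv ℝ).comp_left (g := fun A : E →L[ℝ] E => LinearMap.trace ℝ E A) (by simp)

theorem divergence_le_finrank_mul_norm_fderiv {E : Type*} [NormedAddCommGroup E]
    [InnerProductSpace ℝ E] [FiniteDimensional ℝ E] (X : E → E) (x : E) :
    divergence X x ≤ Module.finrank ℝ E * ‖fderiv ℝ X x‖ := by
  set b := stdOrthonormalBasis ℝ E
  have hb : ∀ i, ⟪b i, fderiv ℝ X x (b i)⟫ ≤ ‖fderiv ℝ X x‖ := fun i =>
    (real_inner_le_norm _ _).trans (by simpa using (fderiv ℝ X x).le_opNorm (b i))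
  rw [divergence, LinearMap.trace_eq_sum_inner _ b]
  simpa using Finset.sum_le_card_nsmul Finset.univ _ _ fun i _ => hb i

variable [FiniteDimensional ℝ E] [MeasurableSpace E] [BorelSpace E]
  {μ : Measure E} [μ.IsAddHaarMeasure]

theorem integral_fderiv_apply_eq_zero {g : E → ℝ} (hg : ContDiff ℝ 1 g)
    (hc : HasCompactSupport g) (v : E) : ∫ x, fderiv ℝ g x v ∂μ = 0 := by
  have hg' : Integrable (fun x => fderiv ℝ g x v) μ :=
    ((hg.continuous_fderiv one_ne_zero).clm_apply continuous_const).integrable_of_hasCompactSupport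
      (hc.fderiv_apply ℝ v)
  simpa using integral_mul_fderiv_eq_neg_fderiv_mul_of_integrable (μ := μ) (f := fun _ => (1 : ℝ))
    (g := g) (v := v) (by simp) (by simpa using hg')
    (by simpa using hg.continuous.integrable_of_hasCompactSupport hc)
    (fun x _ => differentiableAt_const _) (fun x _ => hg.differentiable one_ne_zero x)

theorem integral_divergence_eq_zero {X : E → E} (hX : ContDiff ℝ 1 X)
    (hc : HasCompactSupport X) : ∫ x, divergence X x ∂μ = 0 := by
  let b := Module.finBasis ℝ E
  let c (i) : E →L[ℝ] ℝ := LinearMap.toContinuousLinearMap (b.coord i)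
  have hcX : ∀ i, ContDiff ℝ 1 (c i ∘ X) := fun i => (c i).contDiff.comp hX
  have hcc : ∀ i, HasCompactSupport (c i ∘ X) := fun i => hc.comp_left (map_zero (c i))
  have htrace : ∀ x, divergence X x = ∑ i, fderiv ℝ (c i ∘ X) x (b i) := fun x => by
    rw [divergence, LinearMap.trace_eq_matrix_trace ℝ b, Matrix.trace]
    refine Finset.sum_congr rfl fun i _ => ?_
    rw [((c i).hasFDerivAt.comp x (hX.differentiable one_ne_zero x).hasFDerivAt).fderiv]
    simp [c, LinearMap.toMatrix_apply]
  simp_rw [htrace]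
  rw [integral_finsetSum]
  · exact Finset.sum_eq_zero fun i _ => integral_fderiv_apply_eq_zero (hcX i) (hcc i) _
  · exact fun i _ => (((hcX i).continuous_fderiv one_ne_zero).clm_apply
      continuous_const).integrable_of_hasCompactSupport ((hcc i).fderiv_apply ℝ _)

end Divergence

section CutoffEstimate

variable {E : Type*} [NormedAddCommGroup E] [NormedSpace ℝ E]

theorem contDiff_smul_of_tsupport_subset {F : Type*} [NormedAddCommGroup F] [NormedSpace ℝ F]
    {n : ℕ∞} {A : Set E} (hA : IsOpen A) {k : E → ℝ} {g : E → F} (hk : ContDiff ℝ n k)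
    (hs : tsupport k ⊆ A) (hg : ContDiffOn ℝ n g A) : ContDiff ℝ n fun x => k x • g x := by
  refine contDiff_iff_contDiffAt.2 fun x => ?_
  by_cases hx : x ∈ tsupport k
  · exact hk.contDiffAt.smul (hg.contDiffAt (hA.mem_nhds (hs hx)))
  · refine (contDiffAt_const (c := (0 : F))).congr_of_eventuallyEq ?_
    filter_upwards [notMem_tsupport_iff_eventuallyEq.1 hx] with z hz
    simp [hz]

theorem tsupport_fderiv_apply_field_subset {H : E → E} {p : E → ℝ} :
    tsupport (fun x => fderiv ℝ p x (H x)) ⊆ tsupport p :=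
  (closure_mono (Function.support_subset_iff'.2 fun x hx => by
    simp [Function.notMem_support.1 hx])).trans (tsupport_fderiv_subset ℝ)

theorem continuous_fderiv_apply_of_tsupport_subset {D : Set E} (hD : IsOpen D) {H : E → E}
    (hH : ContinuousOn H D) {p : E → ℝ} (hp : ContDiff ℝ 1 p) (hs : tsupport p ⊆ D) :
    Continuous fun x => fderiv ℝ p x (H x) :=
  ContinuousOn.continuous_of_tsupport_subset
    ((hp.continuous_fderiv one_ne_zero).continuousOn.clm_apply hH) hD
    (tsupport_fderiv_apply_field_subset.trans hs)

theorem integrableOn_mul_of_hasCompactSupport {X : Type*} [TopologicalSpace X] [MeasurableSpace X]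
    [OpensMeasurableSpace X] {μ : Measure X} [IsFiniteMeasureOnCompacts μ] {D : Set X}
    (hD : IsOpen D) {k g : X → ℝ} (hk : Continuous k) (hc : HasCompactSupport k)
    (hs : tsupport k ⊆ D) (hg : ContinuousOn g D) : IntegrableOn (fun x => k x * g x) D μ :=
  ((ContinuousOn.continuous_of_tsupport_subset (hk.continuousOn.mul hg) hD
    (tsupport_mul_subset_left.trans hs)).integrable_of_hasCompactSupport hc.mul_right).integrableOn

variable [FiniteDimensional ℝ E] [MeasurableSpace E] [BorelSpace E]
  {μ : Measure E} [μ.IsAddHaarMeasure] {D : Set E} {H : E → E}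

theorem integrableOn_and_setIntegral_mul_divergence_add_fderiv_eq_zero (hD : IsOpen D)
    (hH : ContDiffOn ℝ 1 H D) {p : E → ℝ} (hp : ContDiff ℝ 1 p) (hc : HasCompactSupport p)
    (hs : tsupport p ⊆ D) :
    IntegrableOn (fun x => p x * divergence H x + fderiv ℝ p x (H x)) D μ ∧
      ∫ x in D, p x * divergence H x + fderiv ℝ p x (H x) ∂μ = 0 := by
  set X : E → E := fun x => p x • H x
  have hX : ContDiff ℝ 1 X := contDiff_smul_of_tsupport_subset hD hp hs hH
  have hXc : HasCompactSupport X := hc.smul_right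
  have hXs : tsupport X ⊆ D := (tsupport_smul_subset_left _ _).trans hs
  have hdiv : EqOn (divergence X) (fun x => p x * divergence H x + fderiv ℝ p x (H x)) D :=
    fun x hx => divergence_smul (hp.differentiable one_ne_zero x)
      ((hH.differentiableOn one_ne_zero).differentiableAt (hD.mem_nhds hx))
  have hXi : IntegrableOn (divergence X) D μ :=
    ((continuous_divergence hX).integrable_of_hasCompactSupport
      (hasCompactSupport_divergence hXc)).integrableOn
  refine ⟨hXi.congr_fun hdiv hD.measurableSet, ?_⟩
  rw [← setIntegral_congr_fun hD.measurableSet hdiv,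
    setIntegral_eq_integral_of_forall_compl_eq_zero, integral_divergence_eq_zero hX hXc]
  intro x hx
  rw [divergence, image_eq_zero_of_notMem_tsupport fun h => hx (hXs (tsupport_fderiv_subset ℝ h))]
  simp

theorem setIntegral_mul_le_of_add_fderiv_le (hD : IsOpen D) (hH : ContDiffOn ℝ 1 H D)
    {κ : ℝ} (hκ : ∀ x ∈ D, divergence H x ≤ κ) {χ : E → ℝ} (hχ : ContDiff ℝ 1 χ)
    (hχc : HasCompactSupport χ) (hχs : tsupport χ ⊆ D) (hχ0 : ∀ x, 0 ≤ χ x)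
    {q r F : E → ℝ} (hq : ContDiffOn ℝ 1 q D) (hq0 : ∀ x ∈ D, 0 ≤ q x)
    (hr : ContinuousOn r D) (hF : IntegrableOn F D μ)
    (hle : ∀ x ∈ D, r x + fderiv ℝ q x (H x) ≤ F x - κ * q x) :
    ∫ x in D, χ x * r x ∂μ
      ≤ ∫ x in D, χ x * F x ∂μ + ∫ x in D, fderiv ℝ χ x (H x) * q x ∂μ := by
  set p : E → ℝ := fun x => χ x • q x
  obtain ⟨hpi, hp0⟩ := integrableOn_and_setIntegral_mul_divergence_add_fderiv_eq_zero (μ := μ) hD hH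
    (contDiff_smul_of_tsupport_subset hD hχ hχs hq) (hχc.smul_right (f' := q))
    ((tsupport_smul_subset_left χ q).trans hχs)
  have hχF : IntegrableOn (fun x => χ x * F x) D μ := by
    obtain ⟨C, hC⟩ := hχc.exists_bound_of_continuous hχ.continuous
    exact hF.bdd_mul hχ.continuous.aestronglyMeasurable (ae_of_all _ hC)
  have hDχ : IntegrableOn (fun x => fderiv ℝ χ x (H x) * q x) D μ :=
    integrableOn_mul_of_hasCompactSupport hD
      (continuous_fderiv_apply_of_tsupport_subset hD hH.continuousOn hχ hχs)
      (hχc.mono' (subset_closure.trans tsupport_fderiv_apply_field_subset))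
      (tsupport_fderiv_apply_field_subset.trans hχs) hq.continuousOn
  have hpoint : ∀ x ∈ D, χ x * r x ≤ χ x * F x + fderiv ℝ χ x (H x) * q x
      - (p x * divergence H x + fderiv ℝ p x (H x)) := fun x hx => by
    have hDp : fderiv ℝ p x (H x) = χ x * fderiv ℝ q x (H x) + fderiv ℝ χ x (H x) * q x := by
      rw [fderiv_fun_smul (hχ.differentiable one_ne_zero x)
        ((hq.differentiableOn one_ne_zero).differentiableAt (hD.mem_nhds hx))]
      rfl
    have h1 := mul_le_mul_of_nonneg_left (hle x hx) (hχ0 x)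
    have h2 := mul_le_mul_of_nonneg_left (hκ x hx) (mul_nonneg (hχ0 x) (hq0 x hx))
    rw [hDp]
    simp only [p, smul_eq_mul]
    linarith
  have hmono := setIntegral_mono_on (integrableOn_mul_of_hasCompactSupport hD hχ.continuous hχc
    hχs hr) ((hχF.add hDχ).sub hpi) hD.measurableSet hpoint
  rwa [integral_sub' (hχF.add hDχ) hpi, integral_add' hχF hDχ, hp0, sub_zero] at hmono

end CutoffEstimate

section ParametricIntegral

variable {Z X : Type*} [TopologicalSpace Z] [MeasurableSpace Z] [OpensMeasurableSpace Z]
  {μ : Measure Z} {S : Set Z} [TopologicalSpace X] {K : Set X} {γ : Z → X} {w : Z → ℝ}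

theorem continuousOn_slice_fst {Y : Type*} [TopologicalSpace Y] {I : Set Y} {Q : X × Y → ℝ} {t : Y}
    (hQ : ContinuousOn Q (K ×ˢ I)) (ht : t ∈ I) : ContinuousOn (fun x => Q (x, t)) K :=
  hQ.comp (by fun_prop) fun _ hx => ⟨hx, ht⟩

theorem integrableOn_mul_comp {q : X → ℝ} (hS : MeasurableSet S) (hK : IsCompact K)
    (hq : ContinuousOn q K) (hγ : ContinuousOn γ S) (hγK : MapsTo γ S K)
    (hw : IntegrableOn w S μ) : IntegrableOn (fun z => w z * q (γ z)) S μ := by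
  obtain ⟨C, hC⟩ := hK.exists_bound_of_continuousOn hq
  exact hw.mul_bdd ((hq.comp hγ hγK).aestronglyMeasurable hS)
    ((ae_restrict_iff' hS).2 (ae_of_all _ fun z hz => hC _ (hγK hz)))

theorem continuousOn_setIntegral_mul_comp {I : Set ℝ} {Q : X × ℝ → ℝ} (hS : MeasurableSet S)
    (hK : IsCompact K) (hI : IsCompact I) (hQ : ContinuousOn Q (K ×ˢ I)) (hγ : ContinuousOn γ S)
    (hγK : MapsTo γ S K) (hw : IntegrableOn w S μ) :
    ContinuousOn (fun t => ∫ z in S, w z * Q (γ z, t) ∂μ) I := by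
  obtain ⟨C, hC⟩ := (hK.prod hI).exists_bound_of_continuousOn hQ
  refine continuousOn_of_dominated (bound := fun z => ‖w z‖ * C) (fun t ht => ?_)
    (fun t ht => (ae_restrict_iff' hS).2 (ae_of_all _ fun z hz => ?_)) (hw.norm.mul_const C)
    ((ae_restrict_iff' hS).2 (ae_of_all _ fun z hz => ?_))
  · exact (integrableOn_mul_comp hS hK (continuousOn_slice_fst hQ ht) hγ
      hγK hw).aestronglyMeasurable
  · rw [norm_mul]
    exact mul_le_mul_of_nonneg_left (hC _ ⟨hγK hz, ht⟩) (norm_nonneg _)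
  · exact continuousOn_const.mul (hQ.comp (by fun_prop) fun t ht => ⟨hγK hz, ht⟩)

end ParametricIntegral

section TransportInequality

variable {E : Type*} [NormedAddCommGroup E] [NormedSpace ℝ E] {Q : E × ℝ → ℝ} {x : E} {t : ℝ}

theorem hasDerivAt_slice_snd (hQ : DifferentiableAt ℝ Q (x, t)) :
    HasDerivAt (fun s => Q (x, s)) (fderiv ℝ Q (x, t) (0, 1)) t :=
  hQ.hasFDerivAt.comp_hasDerivAt t ((hasDerivAt_const t x).prodMk (hasDerivAt_id t))

theorem fderiv_slice_fst_apply (hQ : DifferentiableAt ℝ Q (x, t)) (v : E) :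
    fderiv ℝ (fun z => Q (z, t)) x v = fderiv ℝ Q (x, t) (v, 0) := by
  have h : HasFDerivAt (fun z => Q (z, t)) _ x := HasFDerivAt.comp x (f := fun z => (z, t))
    hQ.hasFDerivAt ((hasFDerivAt_id x).prodMk (hasFDerivAt_const t x))
  simp [h.fderiv]

variable [MeasurableSpace E] [BorelSpace E] {μ : Measure E} {D : Set E} {a b : ℝ} {χ : E → ℝ}

theorem hasDerivAt_setIntegral_mul [IsFiniteMeasureOnCompacts μ] (hD : IsOpen D)
    (hQ : ContDiffOn ℝ 1 Q (D ×ˢ Ioo a b)) (hχ : Continuous χ) (hχc : HasCompactSupport χ)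
    (hχs : tsupport χ ⊆ D) (ht : t ∈ Ioo a b) :
    HasDerivAt (fun t => ∫ x in D, χ x * Q (x, t) ∂μ)
      (∫ x in D, χ x * fderiv ℝ Q (x, t) (0, 1) ∂μ) t := by
  have hO : IsOpen (D ×ˢ Ioo a b) := hD.prod isOpen_Ioo
  have hQ' := (hQ.continuousOn_fderiv_of_isOpen hO le_rfl).clm_apply
    (continuousOn_const (c := ((0 : E), (1 : ℝ))))
  obtain ⟨δ, hδ, hball⟩ := nhds_basis_closedBall.mem_iff.1 (isOpen_Ioo.mem_nhds ht)
  obtain ⟨C, hC⟩ := (hχc.isCompact.prod (isCompact_closedBall t δ)).exists_bound_of_continuousOn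
    (hQ'.mono (prod_mono hχs hball))
  have hχ0 : ∀ x ∉ tsupport χ, χ x = 0 := fun x hx => image_eq_zero_of_notMem_tsupport hx
  have hint : ∀ {G : E × ℝ → ℝ} {s}, ContinuousOn G (D ×ˢ Ioo a b) → s ∈ Ioo a b →
      IntegrableOn (fun x => χ x * G (x, s)) D μ := fun hG hs =>
    integrableOn_mul_of_hasCompactSupport hD hχ hχc hχs (continuousOn_slice_fst hG hs)
  refine (hasDerivAt_integral_of_dominated_loc_of_deriv_le (μ := μ.restrict D)
    (bound := fun x => ‖χ x‖ * C) (F := fun t x => χ x * Q (x, t))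
    (F' := fun t x => χ x * fderiv ℝ Q (x, t) (0, 1)) (closedBall_mem_nhds t hδ) ?_
    (hint hQ.continuousOn ht) (hint hQ' ht).aestronglyMeasurable ?_ ?_ ?_).2
  · filter_upwards [isOpen_Ioo.mem_nhds ht] with s hs
      using (hint hQ.continuousOn hs).aestronglyMeasurable
  · refine ae_of_all _ fun x s hs => ?_
    by_cases hx : x ∈ tsupport χ
    · rw [norm_mul]
      exact mul_le_mul_of_nonneg_left (hC (x, s) ⟨hx, hs⟩) (norm_nonneg _)
    · simp [hχ0 x hx]
  · exact ((hχ.integrable_of_hasCompactSupport hχc).norm.mul_const C).integrableOn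
  · refine ae_of_all _ fun x s hs => ?_
    by_cases hx : x ∈ tsupport χ
    · exact (hasDerivAt_slice_snd ((hQ.differentiableOn one_ne_zero).differentiableAt
        (hO.mem_nhds ⟨hχs hx, hball hs⟩))).const_mul (χ x)
    · simpa [hχ0 x hx] using hasDerivAt_const s (0 : ℝ)

theorem setIntegral_mul_fderiv_snd_le_of_transport_le [FiniteDimensional ℝ E] [μ.IsAddHaarMeasure]
    {H : E → E} {κ : ℝ} {F : E → ℝ}
    (hD : IsOpen D) (hH : ContDiffOn ℝ 1 H D) (hκ : ∀ x ∈ D, divergence H x ≤ κ)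
    (hF : IntegrableOn F D μ) (hQ : ContDiffOn ℝ 1 Q (D ×ˢ Ioo a b))
    (hQ0 : ∀ x ∈ D, ∀ t ∈ Ioo a b, 0 ≤ Q (x, t))
    (hle : ∀ x ∈ D, ∀ t ∈ Ioo a b, fderiv ℝ Q (x, t) (H x, 1) ≤ F x - κ * Q (x, t))
    (hχ : ContDiff ℝ 1 χ) (hχc : HasCompactSupport χ) (hχs : tsupport χ ⊆ D)
    (hχ0 : ∀ x, 0 ≤ χ x) (ht : t ∈ Ioo a b) :
    ∫ x in D, χ x * fderiv ℝ Q (x, t) (0, 1) ∂μ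
      ≤ ∫ x in D, χ x * F x ∂μ + ∫ x in D, fderiv ℝ χ x (H x) * Q (x, t) ∂μ := by
  have hO : IsOpen (D ×ˢ Ioo a b) := hD.prod isOpen_Ioo
  have hmaps : MapsTo (fun x : E => (x, t)) D (D ×ˢ Ioo a b) := fun x hx => ⟨hx, ht⟩
  refine setIntegral_mul_le_of_add_fderiv_le hD hH hκ hχ hχc hχs hχ0
    (hQ.comp (contDiff_id.prodMk contDiff_const).contDiffOn hmaps) (fun x hx => hQ0 x hx t ht)
    (((hQ.continuousOn_fderiv_of_isOpen hO le_rfl).clm_apply continuousOn_const).comp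
      (by fun_prop) hmaps) hF fun x hx => ?_
  rw [fderiv_slice_fst_apply
    ((hQ.differentiableOn one_ne_zero).differentiableAt (hO.mem_nhds (hmaps hx))),
    ← map_add]
  simpa using hle x hx t ht

theorem setIntegral_mul_le_of_transport_le [FiniteDimensional ℝ E] [μ.IsAddHaarMeasure]
    {H : E → E} {κ : ℝ} {F : E → ℝ}
    (hD : IsOpen D) (hDc : IsCompact (closure D)) (hH : ContDiffOn ℝ 1 H D)
    (hκ : ∀ x ∈ D, divergence H x ≤ κ) (hF : IntegrableOn F D μ) (hab : a ≤ b)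
    (hQc : ContinuousOn Q (closure D ×ˢ Icc a b)) (hQ : ContDiffOn ℝ 1 Q (D ×ˢ Ioo a b))
    (hQ0 : ∀ x ∈ D, ∀ t ∈ Ioo a b, 0 ≤ Q (x, t))
    (hle : ∀ x ∈ D, ∀ t ∈ Ioo a b, fderiv ℝ Q (x, t) (H x, 1) ≤ F x - κ * Q (x, t))
    (hχ : ContDiff ℝ 1 χ) (hχc : HasCompactSupport χ) (hχs : tsupport χ ⊆ D)
    (hχ0 : ∀ x, 0 ≤ χ x) :
    ∫ x in D, χ x * Q (x, b) ∂μ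
      ≤ ∫ x in D, χ x * Q (x, a) ∂μ + (b - a) * ∫ x in D, χ x * F x ∂μ
        + ∫ t in a..b, ∫ x in D, fderiv ℝ χ x (H x) * Q (x, t) ∂μ := by
  have hcont : ∀ {k : E → ℝ}, Continuous k → HasCompactSupport k →
      ContinuousOn (fun t => ∫ x in D, k x * Q (x, t) ∂μ) (Icc a b) := fun hk hkc =>
    continuousOn_setIntegral_mul_comp hD.measurableSet hDc isCompact_Icc hQc continuousOn_id
      subset_closure (hk.integrable_of_hasCompactSupport hkc).integrableOn
  have hflux := hcont (continuous_fderiv_apply_of_tsupport_subset hD hH.continuousOn hχ hχs)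
    (hχc.mono' (subset_closure.trans tsupport_fderiv_apply_field_subset))
  have hftc := intervalIntegral.sub_le_integral_of_hasDeriv_right_of_le hab
    (hcont hχ.continuous hχc)
    (fun t ht => (hasDerivAt_setIntegral_mul hD hQ hχ.continuous hχc hχs ht).hasDerivWithinAt)
    ((continuousOn_const.add hflux).integrableOn_compact isCompact_Icc)
    (fun t ht => setIntegral_mul_fderiv_snd_le_of_transport_le hD hH hκ hF hQ hQ0 hle hχ hχc hχs
      hχ0 ht)
  simp only [Pi.add_apply] at hftc
  rw [intervalIntegral.integral_add intervalIntegrable_const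
    (hflux.intervalIntegrable_of_Icc hab), intervalIntegral.integral_const, smul_eq_mul] at hftc
  linarith

end TransportInequality

section BoundaryKernels

/-- A smooth nondecreasing step from `0` on `(-∞, 1]` to `1` on `[2, ∞)`. Starting the rise at `1`
rather than at `0` keeps the supports of the cutoffs built from it inside the open domain. -/
def smoothStep (s : ℝ) : ℝ := Real.smoothTransition (s - 1)

theorem contDiff_smoothStep : ContDiff ℝ 1 smoothStep :=
  Real.smoothTransition.contDiff.comp (contDiff_id.sub contDiff_const)

theorem smoothStep_of_le_one {s : ℝ} (h : s ≤ 1) : smoothStep s = 0 :=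
  Real.smoothTransition.zero_of_nonpos (by linarith)

theorem smoothStep_of_two_le {s : ℝ} (h : 2 ≤ s) : smoothStep s = 1 :=
  Real.smoothTransition.one_of_one_le (by linarith)

theorem smoothStep_nonneg (s : ℝ) : 0 ≤ smoothStep s := Real.smoothTransition.nonneg _

theorem smoothStep_le_one (s : ℝ) : smoothStep s ≤ 1 := Real.smoothTransition.le_one _

theorem continuous_deriv_smoothStep : Continuous (deriv smoothStep) :=
  contDiff_smoothStep.continuous_deriv le_rfl

theorem hasDerivAt_smoothStep (s : ℝ) : HasDerivAt smoothStep (deriv smoothStep s) s :=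
  (contDiff_smoothStep.differentiable one_ne_zero s).hasDerivAt

theorem deriv_smoothStep_nonneg (s : ℝ) : 0 ≤ deriv smoothStep s :=
  Monotone.deriv_nonneg fun _ _ h => Real.smoothTransition.monotone (by gcongr)

theorem deriv_smoothStep_of_notMem_Icc {s : ℝ} (h : s ∉ Icc (1 : ℝ) 2) :
    deriv smoothStep s = 0 := by
  obtain ⟨c, hc⟩ : ∃ c, smoothStep =ᶠ[𝓝 s] fun _ => c := by
    rcases not_and_or.1 h with h | h
    · exact ⟨0, by filter_upwards [Iio_mem_nhds (not_le.1 h)] with z hz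
        using smoothStep_of_le_one (le_of_lt hz)⟩
    · exact ⟨1, by filter_upwards [Ioi_mem_nhds (not_le.1 h)] with z hz
        using smoothStep_of_two_le (le_of_lt hz)⟩
  rw [hc.deriv_eq, deriv_const]

theorem integral_deriv_smoothStep : ∫ s in Icc (1 : ℝ) 2, deriv smoothStep s = 1 := by
  rw [integral_Icc_eq_integral_Ioc, ← intervalIntegral.integral_of_le one_le_two,
    intervalIntegral.integral_deriv_eq_sub' smoothStep rfl
      (fun s _ => contDiff_smoothStep.differentiable one_ne_zero s)
      continuous_deriv_smoothStep.continuousOn,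
    smoothStep_of_le_one le_rfl, smoothStep_of_two_le le_rfl, sub_zero]

theorem integrableOn_deriv_smoothStep : IntegrableOn (deriv smoothStep) (Icc 1 2) :=
  continuous_deriv_smoothStep.continuousOn.integrableOn_compact isCompact_Icc

/-- A kernel supported in `[a, b]` that concentrates at the upper end `b` as `ε → 0`. -/
def upperKernel (ε a b s : ℝ) : ℝ :=
  ε⁻¹ * deriv smoothStep ((b - s) / ε) * smoothStep ((s - a) / ε)

/-- A kernel supported in `[a, b]` that concentrates at the lower end `a` as `ε → 0`. -/
def lowerKernel (ε a b s : ℝ) : ℝ :=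
  ε⁻¹ * deriv smoothStep ((s - a) / ε) * smoothStep ((b - s) / ε)

variable {ε a b : ℝ} {g : ℝ → ℝ}

theorem lowerKernel_eq_upperKernel (ε a b s : ℝ) :
    lowerKernel ε a b s = upperKernel ε (-b) (-a) (-s) := by
  rw [upperKernel, lowerKernel, show -a - -s = s - a by ring, show -s - -b = b - s by ring]

theorem continuous_upperKernel (ε a b : ℝ) : Continuous (upperKernel ε a b) :=
  (continuous_const.mul (continuous_deriv_smoothStep.comp (by fun_prop))).mul
    (contDiff_smoothStep.continuous.comp (by fun_prop))

theorem continuous_lowerKernel (ε a b : ℝ) : Continuous (lowerKernel ε a b) :=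
  (continuous_const.mul (continuous_deriv_smoothStep.comp (by fun_prop))).mul
    (contDiff_smoothStep.continuous.comp (by fun_prop))

theorem upperKernel_of_notMem_Ioo {s : ℝ} (hε : 0 < ε) (hs : s ∉ Ioo a b) :
    upperKernel ε a b s = 0 := by
  rcases not_and_or.1 hs with h | h
  · have : (s - a) / ε ≤ 0 := div_nonpos_of_nonpos_of_nonneg (by linarith) hε.le
    rw [upperKernel, smoothStep_of_le_one (by linarith), mul_zero]
  · have : (b - s) / ε ≤ 0 := div_nonpos_of_nonpos_of_nonneg (by linarith) hε.le
    rw [upperKernel, deriv_smoothStep_of_notMem_Icc fun h => by linarith [h.1], mul_zero, zero_mul]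

theorem setIntegral_upperKernel_mul (hε : 0 < ε) (a b : ℝ) (g : ℝ → ℝ) :
    ∫ s in Ioo a b, upperKernel ε a b s * g s =
      ∫ τ in Icc (1 : ℝ) 2,
        deriv smoothStep τ * (smoothStep ((b - a) / ε - τ) * g (b - ε * τ)) := by
  rw [setIntegral_eq_integral_of_forall_compl_eq_zero
    (fun s hs => by rw [upperKernel_of_notMem_Ioo hε hs, zero_mul]),
    setIntegral_eq_integral_of_forall_compl_eq_zero
    (fun τ hτ => by rw [deriv_smoothStep_of_notMem_Icc hτ, zero_mul]),
    ← integral_sub_left_eq_self (fun s => upperKernel ε a b s * g s) volume b]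
  have hscale := Measure.integral_comp_mul_left
    (fun s => upperKernel ε a b (b - s) * g (b - s)) ε
  rw [abs_of_pos (inv_pos.2 hε), smul_eq_mul, eq_inv_mul_iff_mul_eq₀ hε.ne'] at hscale
  rw [← hscale, ← integral_const_mul]
  congr 1 with τ
  rw [upperKernel, show (b - (b - ε * τ)) / ε = τ by field_simp; ring,
    show (b - ε * τ - a) / ε = (b - a) / ε - τ by field_simp; ring]
  field_simp

theorem sub_mul_mem_Icc_of_smoothStep_ne_zero {τ : ℝ} (hε : 0 < ε) (hτ : 0 ≤ τ)
    (h : smoothStep ((b - a) / ε - τ) ≠ 0) : b - ε * τ ∈ Icc a b := by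
  have hlt : 1 < (b - a) / ε - τ := not_le.1 fun hle => h (smoothStep_of_le_one hle)
  have hετ : ε * τ < b - a := by
    rw [mul_comm, ← lt_div_iff₀ hε]
    linarith
  constructor <;> linarith [mul_nonneg hε.le hτ]

theorem norm_deriv_smoothStep_mul_le {C τ : ℝ} (hε : 0 < ε) (hC0 : 0 ≤ C)
    (hC : ∀ s ∈ Icc a b, |g s| ≤ C) (hτ : 0 ≤ τ) :
    ‖deriv smoothStep τ * (smoothStep ((b - a) / ε - τ) * g (b - ε * τ))‖
      ≤ deriv smoothStep τ * C := by
  rw [norm_mul, Real.norm_of_nonneg (deriv_smoothStep_nonneg τ)]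
  refine mul_le_mul_of_nonneg_left ?_ (deriv_smoothStep_nonneg τ)
  by_cases h : smoothStep ((b - a) / ε - τ) = 0
  · simpa [h] using hC0
  · rw [norm_mul, Real.norm_of_nonneg (smoothStep_nonneg _)]
    exact (mul_le_mul (smoothStep_le_one _) (hC _ (sub_mul_mem_Icc_of_smoothStep_ne_zero hε hτ h))
      (abs_nonneg _) zero_le_one).trans_eq (one_mul C)

theorem abs_setIntegral_upperKernel_mul_le {C : ℝ} (hε : 0 < ε) (hC0 : 0 ≤ C)
    (hC : ∀ s ∈ Icc a b, |g s| ≤ C) : |∫ s in Ioo a b, upperKernel ε a b s * g s| ≤ C := by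
  rw [setIntegral_upperKernel_mul hε, ← Real.norm_eq_abs]
  refine (norm_integral_le_of_norm_le (integrableOn_deriv_smoothStep.mul_const C)
    ((ae_restrict_iff' measurableSet_Icc).2 (ae_of_all _ fun τ hτ =>
      norm_deriv_smoothStep_mul_le hε hC0 hC (zero_le_one.trans hτ.1)))).trans_eq ?_
  rw [integral_mul_const, integral_deriv_smoothStep, one_mul]

theorem tendsto_setIntegral_upperKernel_mul (hab : a < b) (hg : ContinuousOn g (Icc a b)) :
    Tendsto (fun ε => ∫ s in Ioo a b, upperKernel ε a b s * g s) (𝓝[>] 0) (𝓝 (g b)) := by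
  obtain ⟨C, hC⟩ := isCompact_Icc.exists_bound_of_continuousOn hg
  have hC0 : 0 ≤ C := (norm_nonneg _).trans (hC b ⟨hab.le, le_rfl⟩)
  have hpos : ∀ᶠ ε : ℝ in 𝓝[>] 0, 0 < ε := self_mem_nhdsWithin
  have hsmall : ∀ᶠ ε : ℝ in 𝓝[>] 0, ∀ τ ∈ Icc (1 : ℝ) 2, smoothStep ((b - a) / ε - τ) = 1 := by
    filter_upwards [Ioo_mem_nhdsGT (show 0 < (b - a) / 4 by linarith)] with ε hε τ hτ
    have : 4 ≤ (b - a) / ε := by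
      rw [le_div_iff₀ hε.1]
      linarith [hε.2]
    exact smoothStep_of_two_le (by linarith [hτ.2])
  have hmem : ∀ᶠ ε : ℝ in 𝓝[>] 0, ∀ τ ∈ Icc (1 : ℝ) 2, b - ε * τ ∈ Icc a b := by
    filter_upwards [hpos, hsmall] with ε hε h τ hτ
    exact sub_mul_mem_Icc_of_smoothStep_ne_zero hε (zero_le_one.trans hτ.1) (by simp [h τ hτ])
  have hlim : ∫ τ in Icc (1 : ℝ) 2, deriv smoothStep τ * (1 * g b) = g b := by
    rw [integral_mul_const, integral_deriv_smoothStep, one_mul, one_mul]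
  rw [← hlim]
  refine Tendsto.congr' (hpos.mono fun ε hε => (setIntegral_upperKernel_mul hε a b g).symm) ?_
  refine tendsto_integral_filter_of_dominated_convergence (fun τ => deriv smoothStep τ * C) ?_ ?_
    (integrableOn_deriv_smoothStep.mul_const C) ?_
  · filter_upwards [hmem] with ε hε
    exact (continuous_deriv_smoothStep.continuousOn.mul
      ((contDiff_smoothStep.continuous.comp (by fun_prop)).continuousOn.mul
        (hg.comp (by fun_prop) hε))).aestronglyMeasurable measurableSet_Icc
  · filter_upwards [hpos] with ε hε
    exact (ae_restrict_iff' measurableSet_Icc).2 (ae_of_all _ fun τ hτ =>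
      norm_deriv_smoothStep_mul_le hε hC0 hC (zero_le_one.trans hτ.1))
  · refine (ae_restrict_iff' measurableSet_Icc).2 (ae_of_all _ fun τ hτ => ?_)
    have hto : Tendsto (fun ε : ℝ => b - ε * τ) (𝓝[>] 0) (𝓝 b) :=
      ((by fun_prop : Continuous fun ε : ℝ => b - ε * τ).tendsto' 0 b (by simp)).mono_left
        nhdsWithin_le_nhds
    exact tendsto_const_nhds.mul ((tendsto_const_nhds.congr' (hsmall.mono fun ε h =>
      (h τ hτ).symm)).mul ((hg b ⟨hab.le, le_rfl⟩).tendsto.comp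
        (tendsto_nhdsWithin_iff.2 ⟨hto, hmem.mono fun ε h => h τ hτ⟩)))

theorem setIntegral_lowerKernel_mul (hε : 0 < ε) (a b : ℝ) (g : ℝ → ℝ) :
    ∫ s in Ioo a b, lowerKernel ε a b s * g s
      = ∫ s in Ioo (-b) (-a), upperKernel ε (-b) (-a) s * g (-s) := by
  rw [setIntegral_eq_integral_of_forall_compl_eq_zero,
    setIntegral_eq_integral_of_forall_compl_eq_zero,
    ← integral_neg_eq_self fun s => lowerKernel ε a b s * g s]
  · simp only [lowerKernel_eq_upperKernel, neg_neg]
  · exact fun s hs => by rw [upperKernel_of_notMem_Ioo hε hs, zero_mul]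
  · intro s hs
    rw [lowerKernel_eq_upperKernel, upperKernel_of_notMem_Ioo hε, zero_mul]
    exact fun h => hs ⟨neg_lt_neg_iff.1 h.2, neg_lt_neg_iff.1 h.1⟩

theorem abs_setIntegral_lowerKernel_mul_le {C : ℝ} (hε : 0 < ε) (hC0 : 0 ≤ C)
    (hC : ∀ s ∈ Icc a b, |g s| ≤ C) : |∫ s in Ioo a b, lowerKernel ε a b s * g s| ≤ C := by
  rw [setIntegral_lowerKernel_mul hε]
  exact abs_setIntegral_upperKernel_mul_le hε hC0 fun s hs => hC _ ⟨le_neg.1 hs.2, neg_le.1 hs.1⟩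

theorem tendsto_setIntegral_lowerKernel_mul (hab : a < b) (hg : ContinuousOn g (Icc a b)) :
    Tendsto (fun ε => ∫ s in Ioo a b, lowerKernel ε a b s * g s) (𝓝[>] 0) (𝓝 (g a)) := by
  refine Tendsto.congr' (eventually_mem_nhdsWithin.mono fun ε hε =>
    (setIntegral_lowerKernel_mul hε a b g).symm) ?_
  simpa using tendsto_setIntegral_upperKernel_mul (neg_lt_neg hab) (g := fun s => g (-s))
    (hg.comp (by fun_prop) fun s hs => ⟨le_neg.1 hs.2, neg_le.1 hs.1⟩)

end BoundaryKernels

/-- The component `x'` of `x = (x', xₙ)`. -/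
def headL (d : ℕ) : Esp (d + 1) →L[ℝ] Esp d :=
  (EuclideanSpace.equiv (Fin d) ℝ).symm.toContinuousLinearMap.comp
    (ContinuousLinearMap.pi fun i => EuclideanSpace.proj (Fin.castSucc i))

/-- The last coordinate `xₙ` of `x = (x', xₙ)`. -/
def lastL (d : ℕ) : Esp (d + 1) →L[ℝ] ℝ := EuclideanSpace.proj (Fin.last d)

section Coordinates

variable {d : ℕ}

theorem headL_apply (x : Esp (d + 1)) (i : Fin d) : headL d x i = x i.castSucc := rfl

theorem lastL_apply (x : Esp (d + 1)) : lastL d x = x (Fin.last d) := rfl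

@[simp] theorem graphMk_castSucc (z : Esp d) (s : ℝ) (i : Fin d) :
    graphMk d z s i.castSucc = z i := by
  simp [graphMk]

@[simp] theorem graphMk_last (z : Esp d) (s : ℝ) : graphMk d z s (Fin.last d) = s := by
  simp [graphMk]

@[simp] theorem headL_graphMk (z : Esp d) (s : ℝ) : headL d (graphMk d z s) = z := by
  ext i; simp [headL_apply]

@[simp] theorem lastL_graphMk (z : Esp d) (s : ℝ) : lastL d (graphMk d z s) = s := by
  simp [lastL_apply]

theorem graphMk_headL_lastL (x : Esp (d + 1)) : graphMk d (headL d x) (lastL d x) = x := by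
  ext i
  refine Fin.lastCases ?_ (fun i => ?_) i
  · simp [lastL_apply]
  · simp [headL_apply]

theorem graphMk_neg (z : Esp d) (s : ℝ) : graphMk d (-z) (-s) = -graphMk d z s := by
  rw [← graphMk_headL_lastL (-graphMk d z s)]
  simp

theorem inner_graphMk (h : Esp (d + 1)) (z : Esp d) (s : ℝ) :
    ⟪h, graphMk d z s⟫ = ⟪headL d h, z⟫ + lastL d h * s := by
  simp only [PiLp.inner_apply, Fin.sum_univ_castSucc, graphMk_castSucc, graphMk_last, headL_apply,
    lastL_apply]
  simp [mul_comm]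

theorem norm_graphMk_sq (z : Esp d) (s : ℝ) : ‖graphMk d z s‖ ^ 2 = ‖z‖ ^ 2 + s ^ 2 := by
  rw [← real_inner_self_eq_norm_sq, inner_graphMk, headL_graphMk, lastL_graphMk,
    real_inner_self_eq_norm_sq, sq s]

theorem continuous_graphMk (d : ℕ) : Continuous fun p : Esp d × ℝ => graphMk d p.1 p.2 := by
  refine (EuclideanSpace.equiv (Fin (d + 1)) ℝ).symm.continuous.comp (continuous_pi fun i => ?_)
  refine Fin.lastCases ?_ (fun i => ?_) i
  · simpa using continuous_snd
  · simp only [Fin.snoc_castSucc]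
    fun_prop

/-- The splitting `ℝ^{d + 1} = ℝ^d × ℝ` as a homeomorphism. -/
def graphHomeomorph (d : ℕ) : Esp d × ℝ ≃ₜ Esp (d + 1) where
  toFun p := graphMk d p.1 p.2
  invFun x := (headL d x, lastL d x)
  left_inv p := by simp
  right_inv x := graphMk_headL_lastL x
  continuous_toFun := continuous_graphMk d
  continuous_invFun := (headL d).continuous.prodMk (lastL d).continuous

theorem measurePreserving_graphHomeomorph (d : ℕ) :
    MeasurePreserving (graphHomeomorph d) (volume.prod volume) volume := by
  have hsnoc := (PiLp.volume_preserving_toLp (Fin (d + 1))).comp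
    (volume_preserving_piFinSuccAbove (fun _ : Fin (d + 1) => ℝ) (Fin.last d)).symm
  have hswap : MeasurePreserving (fun p : Esp d × ℝ => (p.2, WithLp.ofLp p.1))
      (volume.prod volume) (volume.prod volume) :=
    ((MeasurePreserving.id (volume : Measure ℝ)).prod
      (PiLp.volume_preserving_ofLp (Fin d))).comp
      (Measure.measurePreserving_swap (μ := (volume : Measure (Esp d)))
        (ν := (volume : Measure ℝ)))
  have hcoe : ⇑(graphHomeomorph d) = (WithLp.toLp 2 ∘
      ⇑(MeasurableEquiv.piFinSuccAbove (fun _ : Fin (d + 1) => ℝ) (Fin.last d)).symm) ∘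
      fun p : Esp d × ℝ => (p.2, WithLp.ofLp p.1) := by
    ext p i
    refine Fin.lastCases ?_ (fun i => ?_) i <;>
      simp [graphHomeomorph, MeasurableEquiv.piFinSuccAbove]
  rw [hcoe]
  exact hsnoc.comp hswap

end Coordinates

section GraphDomain

variable {d : ℕ} {ρ₁ : ℝ} {ℓ ℓt : Esp d → ℝ}

theorem mem_graphDomain {x : Esp (d + 1)} :
    x ∈ graphDomain d ρ₁ ℓ ℓt ↔ ‖headL d x‖ < ρ₁ ∧
      ℓ (headL d x) - ℓt (headL d x) < lastL d x ∧ lastL d x < ℓ (headL d x) := by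
  constructor
  · rintro ⟨z, s, hz, hlow, hup, rfl⟩
    simpa using ⟨hz, hlow, hup⟩
  · rintro ⟨hz, hlow, hup⟩
    exact ⟨_, _, hz, hlow, hup, (graphMk_headL_lastL x).symm⟩

theorem graphMk_mem_graphDomain {z : Esp d} {s : ℝ} :
    graphMk d z s ∈ graphDomain d ρ₁ ℓ ℓt ↔
      z ∈ ball (0 : Esp d) ρ₁ ∧ s ∈ Ioo (ℓ z - ℓt z) (ℓ z) := by
  simp [mem_graphDomain]

theorem closedBall_mem_nhds_of_norm_lt {z : Esp d} (hz : ‖z‖ < ρ₁) :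
    closedBall (0 : Esp d) ρ₁ ∈ 𝓝 z :=
  mem_of_superset (isOpen_ball.mem_nhds (mem_ball_zero_iff.2 hz)) ball_subset_closedBall

theorem isOpen_graphDomain (hℓ : ContinuousOn ℓ (closedBall 0 ρ₁))
    (hℓt : ContinuousOn ℓt (closedBall 0 ρ₁)) : IsOpen (graphDomain d ρ₁ ℓ ℓt) := by
  refine isOpen_iff_mem_nhds.2 fun x hx => ?_
  obtain ⟨hz, hlow, hup⟩ := mem_graphDomain.1 hx
  have hnhds := closedBall_mem_nhds_of_norm_lt hz
  have chead : ContinuousAt (headL d) x := (headL d).continuous.continuousAt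
  have clast : ContinuousAt (lastL d) x := (lastL d).continuous.continuousAt
  have cℓ : ContinuousAt (fun x => ℓ (headL d x)) x :=
    ContinuousAt.comp (hℓ.continuousAt hnhds) chead
  have cℓt : ContinuousAt (fun x => ℓt (headL d x)) x :=
    ContinuousAt.comp (hℓt.continuousAt hnhds) chead
  filter_upwards [chead.norm.eventually_lt continuousAt_const hz,
    (cℓ.sub cℓt).eventually_lt clast hlow, clast.eventually_lt cℓ hup] with x h₁ h₂ h₃
    using mem_graphDomain.2 ⟨h₁, h₂, h₃⟩

theorem isCompact_closure_graphDomain (hℓ : ContinuousOn ℓ (closedBall 0 ρ₁))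
    (hℓt : ContinuousOn ℓt (closedBall 0 ρ₁)) :
    IsCompact (closure (graphDomain d ρ₁ ℓ ℓt)) := by
  obtain ⟨A, hA⟩ := (isCompact_closedBall (0 : Esp d) ρ₁).bddAbove_image hℓ
  obtain ⟨B, hB⟩ := (isCompact_closedBall (0 : Esp d) ρ₁).bddBelow_image (hℓ.sub hℓt)
  have hK := ((isCompact_closedBall (0 : Esp d) ρ₁).prod (isCompact_Icc (a := B) (b := A))).image
    (continuous_graphMk d)
  refine hK.closure_of_subset ?_
  rintro _ ⟨z, s, hz, hlow, hup, rfl⟩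
  have hz' : z ∈ closedBall (0 : Esp d) ρ₁ := mem_closedBall_zero_iff.2 hz.le
  exact ⟨(z, s), ⟨hz', (hB (mem_image_of_mem _ hz')).trans hlow.le,
    hup.le.trans (hA (mem_image_of_mem _ hz'))⟩, rfl⟩

theorem graphMk_mem_closure_graphDomain (hpos : ∀ z, ‖z‖ < ρ₁ → 0 < ℓt z) {z : Esp d}
    (hz : z ∈ ball (0 : Esp d) ρ₁) {s : ℝ} (hs : s ∈ Icc (ℓ z - ℓt z) (ℓ z)) :
    graphMk d z s ∈ closure (graphDomain d ρ₁ ℓ ℓt) := by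
  have hlt : ℓ z - ℓt z < ℓ z := sub_lt_self _ (hpos z (mem_ball_zero_iff.1 hz))
  rw [← closure_Ioo hlt.ne] at hs
  exact map_mem_closure ((continuous_graphMk d).comp (Continuous.prodMk_right z)) hs
    fun s hs => graphMk_mem_graphDomain.2 ⟨hz, hs⟩

theorem graphMk_upper_mem_closure (hpos : ∀ z, ‖z‖ < ρ₁ → 0 < ℓt z) {z : Esp d}
    (hz : z ∈ ball (0 : Esp d) ρ₁) :
    graphMk d z (ℓ z) ∈ closure (graphDomain d ρ₁ ℓ ℓt) :=
  graphMk_mem_closure_graphDomain hpos hz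
    (right_mem_Icc.2 (sub_le_self _ (hpos z (mem_ball_zero_iff.1 hz)).le))

theorem graphMk_lower_mem_closure (hpos : ∀ z, ‖z‖ < ρ₁ → 0 < ℓt z) {z : Esp d}
    (hz : z ∈ ball (0 : Esp d) ρ₁) :
    graphMk d z (ℓ z - ℓt z) ∈ closure (graphDomain d ρ₁ ℓ ℓt) :=
  graphMk_mem_closure_graphDomain hpos hz
    (left_mem_Icc.2 (sub_le_self _ (hpos z (mem_ball_zero_iff.1 hz)).le))

section Fubini

variable {G : Esp (d + 1) → ℝ}

theorem integral_indicator_graphDomain_graphMk (z : Esp d) :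
    ∫ s, (graphDomain d ρ₁ ℓ ℓt).indicator G (graphMk d z s) =
      (ball (0 : Esp d) ρ₁).indicator
        (fun z => ∫ s in Ioo (ℓ z - ℓt z) (ℓ z), G (graphMk d z s)) z := by
  by_cases hz : ‖z‖ < ρ₁
  · simp only [indicator_of_mem (mem_ball_zero_iff.2 hz), ← integral_indicator measurableSet_Ioo]
    congr with s
    simp [indicator, graphMk_mem_graphDomain, hz]
  · simp [indicator, graphMk_mem_graphDomain, hz]

variable (hD : MeasurableSet (graphDomain d ρ₁ ℓ ℓt))
  (hG : IntegrableOn G (graphDomain d ρ₁ ℓ ℓt))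
include hD hG

theorem integrable_indicator_graphDomain_graphMk :
    Integrable (fun p : Esp d × ℝ => (graphDomain d ρ₁ ℓ ℓt).indicator G (graphMk d p.1 p.2))
      (volume.prod volume) :=
  ((measurePreserving_graphHomeomorph d).integrable_comp_emb
    (graphHomeomorph d).measurableEmbedding).2 ((integrable_indicator_iff hD).2 hG)

theorem integrableOn_setIntegral_graphMk :
    IntegrableOn (fun z => ∫ s in Ioo (ℓ z - ℓt z) (ℓ z), G (graphMk d z s)) (ball 0 ρ₁) := by
  rw [← integrable_indicator_iff measurableSet_ball]
  exact (integrable_indicator_graphDomain_graphMk hD hG).integral_prod_left.congr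
    (Eventually.of_forall integral_indicator_graphDomain_graphMk)

theorem setIntegral_graphDomain :
    ∫ x in graphDomain d ρ₁ ℓ ℓt, G x =
      ∫ z in ball (0 : Esp d) ρ₁, ∫ s in Ioo (ℓ z - ℓt z) (ℓ z), G (graphMk d z s) := by
  rw [← integral_indicator hD, ← (measurePreserving_graphHomeomorph d).integral_comp
    (graphHomeomorph d).measurableEmbedding, ← integral_indicator measurableSet_ball]
  exact (integral_prod _ (integrable_indicator_graphDomain_graphMk hD hG)).trans
    (integral_congr_ae (Eventually.of_forall integral_indicator_graphDomain_graphMk))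

end Fubini

end GraphDomain

section Normals

variable {d : ℕ} {ρ₁ : ℝ} {m : Esp d → ℝ}

theorem omegaW_pos (m : Esp d → ℝ) (z : Esp d) : 0 < omegaW d m z :=
  Real.sqrt_pos.2 (by positivity)

theorem omegaW_mul_inner_nuUp (m : Esp d → ℝ) (z : Esp d) (h : Esp (d + 1)) :
    omegaW d m z * ⟪h, nuUp d m z⟫ = lastL d h - fderiv ℝ m z (headL d h) := by
  rw [nuUp, inner_smul_right, inner_graphMk, inner_neg_right, real_inner_comm,
    inner_gradient_left]
  exact (mul_inv_cancel_left₀ (omegaW_pos m z).ne' _).trans (by ring)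

theorem norm_nuUp (m : Esp d → ℝ) (z : Esp d) : ‖nuUp d m z‖ = 1 := by
  have hnorm : ‖graphMk d (-gradient m z) 1‖ = omegaW d m z := by
    rw [omegaW, ← Real.sqrt_sq (norm_nonneg (graphMk d _ _)), norm_graphMk_sq, norm_neg, one_pow,
      add_comm]
  rw [nuUp, norm_smul, hnorm, norm_inv, Real.norm_of_nonneg (Real.sqrt_nonneg _)]
  exact inv_mul_cancel₀ (omegaW_pos m z).ne'

theorem nuDown_eq_neg_nuUp (m : Esp d → ℝ) : nuDown d m = -nuUp d m := by
  ext1 z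
  rw [Pi.neg_apply, nuDown, nuUp, ← smul_neg, ← graphMk_neg, neg_neg]

theorem norm_nuDown (m : Esp d → ℝ) (z : Esp d) : ‖nuDown d m z‖ = 1 := by
  rw [nuDown_eq_neg_nuUp, Pi.neg_apply, norm_neg, norm_nuUp]

section Regularity

variable (hm : ContDiffOn ℝ 1 m (closedBall 0 ρ₁))
include hm

theorem continuousOn_gradient_ball : ContinuousOn (gradient m) (ball 0 ρ₁) :=
  (InnerProductSpace.toDual ℝ (Esp d)).symm.continuous.comp_continuousOn
    ((hm.mono ball_subset_closedBall).continuousOn_fderiv_of_isOpen isOpen_ball le_rfl)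

theorem continuousOn_omegaW : ContinuousOn (omegaW d m) (ball 0 ρ₁) :=
  (continuousOn_const.add ((continuousOn_gradient_ball hm).norm.pow 2)).sqrt

theorem continuousOn_nuUp : ContinuousOn (nuUp d m) (ball 0 ρ₁) :=
  ((continuousOn_omegaW hm).inv₀ fun z _ => (omegaW_pos m z).ne').smul
    ((continuous_graphMk d).comp_continuousOn
      ((continuousOn_gradient_ball hm).neg.prodMk continuousOn_const))

theorem continuousOn_nuDown : ContinuousOn (nuDown d m) (ball 0 ρ₁) :=
  nuDown_eq_neg_nuUp m ▸ (continuousOn_nuUp hm).neg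

theorem integrableOn_omegaW : IntegrableOn (omegaW d m) (ball 0 ρ₁) := by
  rcases le_or_gt ρ₁ 0 with hρ | hρ
  · simp [ball_eq_empty.2 hρ]
  have hu : UniqueDiffOn ℝ (closedBall (0 : Esp d) ρ₁) :=
    uniqueDiffOn_convex (convex_closedBall _ _)
      ((nonempty_ball.2 hρ).mono (interior_maximal ball_subset_closedBall isOpen_ball))
  have hcont : ContinuousOn (fun z => √(1 + ‖fderivWithin ℝ m (closedBall 0 ρ₁) z‖ ^ 2))
      (closedBall 0 ρ₁) :=
    (continuousOn_const.add ((hm.continuousOn_fderivWithin hu le_rfl).norm.pow 2)).sqrt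
  refine ((hcont.integrableOn_compact (isCompact_closedBall _ _)).mono_set
    ball_subset_closedBall).congr_fun (fun z hz => ?_) measurableSet_ball
  simp only [omegaW, gradient, LinearIsometryEquiv.norm_map, fderivWithin_of_mem_nhds
    (closedBall_mem_nhds_of_norm_lt (mem_ball_zero_iff.1 hz))]

end Regularity

end Normals

/-- The density `⟨H, ν⟩ ω` of the flux of `H` through the graph of `m` with normal field `ν`, in
the parameter `x'`. -/
def fluxWeight (d : ℕ) (m : Esp d → ℝ) (ν : Esp d → Esp (d + 1)) (H : Esp (d + 1) → Esp (d + 1))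
    (z : Esp d) : ℝ :=
  omegaW d m z * ⟪H (graphMk d z (m z)), ν z⟫

/-- The area density `1_{⟨H, ν⟩ ≤ 0} ω` of the inflow part of the graph of `m` with normal field
`ν`, in the parameter `x'`. -/
def inflowWeight (d : ℕ) (m : Esp d → ℝ) (ν : Esp d → Esp (d + 1)) (H : Esp (d + 1) → Esp (d + 1)) :
    Esp d → ℝ :=
  {z | ⟪H (graphMk d z (m z)), ν z⟫ ≤ 0}.indicator (omegaW d m)

section GraphSurface

variable {d : ℕ} {ρ₁ N : ℝ} {m : Esp d → ℝ} {ν : Esp d → Esp (d + 1)}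
  {H : Esp (d + 1) → Esp (d + 1)} {K : Set (Esp (d + 1))}

theorem neg_fluxWeight_le {z : Esp d} (hν : ‖ν z‖ ≤ 1) (hN : ‖H (graphMk d z (m z))‖ ≤ N) :
    -fluxWeight d m ν H z ≤ N * inflowWeight d m ν H z := by
  have hω := omegaW_pos m z
  rw [fluxWeight, inflowWeight]
  by_cases h : z ∈ {z | ⟪H (graphMk d z (m z)), ν z⟫ ≤ 0}
  · have hinner : -⟪H (graphMk d z (m z)), ν z⟫ ≤ N :=
      (neg_le_abs _).trans ((abs_real_inner_le_norm _ _).trans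
        ((mul_le_of_le_one_right (norm_nonneg _) hν).trans hN))
    rw [indicator_of_mem h, ← mul_neg, mul_comm]
    exact mul_le_mul_of_nonneg_right hinner hω.le
  · rw [indicator_of_notMem h, mul_zero, neg_nonpos]
    exact mul_nonneg hω.le (not_le.1 h).le

theorem continuousOn_graphMk_graph (hm : ContinuousOn m (closedBall 0 ρ₁)) :
    ContinuousOn (fun z => graphMk d z (m z)) (ball 0 ρ₁) :=
  (continuous_graphMk d).comp_continuousOn
    (continuousOn_id.prodMk (hm.mono ball_subset_closedBall))

section Integrability

variable (hm : ContDiffOn ℝ 1 m (closedBall 0 ρ₁)) (hν : ContinuousOn ν (ball 0 ρ₁))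
  (hH : ContinuousOn H K) (hmK : MapsTo (fun z => graphMk d z (m z)) (ball 0 ρ₁) K)
include hm hν hH hmK

theorem continuousOn_inner_normal :
    ContinuousOn (fun z => ⟪H (graphMk d z (m z)), ν z⟫) (ball 0 ρ₁) :=
  (hH.comp (continuousOn_graphMk_graph hm.continuousOn) hmK).inner hν

theorem integrableOn_inflowWeight : IntegrableOn (inflowWeight d m ν H) (ball 0 ρ₁) :=
  Integrable.indicator₀ (integrableOn_omegaW hm) (nullMeasurableSet_le
    ((continuousOn_inner_normal hm hν hH hmK).aemeasurable measurableSet_ball) aemeasurable_const)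

theorem integrableOn_fluxWeight (hν1 : ∀ z, ‖ν z‖ ≤ 1) (hN : ∀ x ∈ K, ‖H x‖ ≤ N) :
    IntegrableOn (fluxWeight d m ν H) (ball 0 ρ₁) :=
  (integrableOn_omegaW hm).mul_bdd
    ((continuousOn_inner_normal hm hν hH hmK).aestronglyMeasurable measurableSet_ball)
    ((ae_restrict_iff' measurableSet_ball).2 (ae_of_all _ fun z hz =>
      (norm_inner_le_norm _ _).trans
        ((mul_le_of_le_one_right (norm_nonneg _) (hν1 z)).trans (hN _ (hmK hz)))))

theorem neg_setIntegral_fluxWeight_mul_le (hK : IsCompact K) (hν1 : ∀ z, ‖ν z‖ ≤ 1)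
    (hN : ∀ x ∈ K, ‖H x‖ ≤ N) {q : Esp (d + 1) → ℝ} (hq : ContinuousOn q K)
    (hq0 : ∀ x ∈ K, 0 ≤ q x) :
    -∫ z in ball 0 ρ₁, fluxWeight d m ν H z * q (graphMk d z (m z)) ≤
      N * ∫ z in ball 0 ρ₁, inflowWeight d m ν H z * q (graphMk d z (m z)) := by
  have hγ := continuousOn_graphMk_graph hm.continuousOn
  rw [← integral_neg, ← integral_const_mul]
  refine setIntegral_mono_on
    (integrableOn_mul_comp measurableSet_ball hK hq hγ hmK
      (integrableOn_fluxWeight hm hν hH hmK hν1 hN)).neg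
    ((integrableOn_mul_comp measurableSet_ball hK hq hγ hmK
      (integrableOn_inflowWeight hm hν hH hmK)).const_mul N) measurableSet_ball fun z hz => ?_
  rw [← neg_mul, ← mul_assoc]
  exact mul_le_mul_of_nonneg_right (neg_fluxWeight_le (hν1 z) (hN _ (hmK hz))) (hq0 _ (hmK hz))

end Integrability

end GraphSurface

/-- The integral of `w` over the inflow part `{⟨H, ν⟩ ≤ 0}` of the upper and lower boundary graphs
of `graphDomain d ρ₁ ℓ ℓt`. -/
def inflowIntegral (d : ℕ) (ρ₁ : ℝ) (ℓ ℓt : Esp d → ℝ) (H : Esp (d + 1) → Esp (d + 1))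
    (w : Esp (d + 1) → ℝ) : ℝ :=
  ∫ x' in ball (0 : Esp d) ρ₁,
    ({z' : Esp d | ⟪H (graphMk d z' (ℓ z')), nuUp d ℓ z'⟫ ≤ 0}.indicator
        (fun z' => w (graphMk d z' (ℓ z')) * omegaW d ℓ z') x'
      + {z' : Esp d | ⟪H (graphMk d z' (ℓ z' - ℓt z')), nuDown d (fun z => ℓ z - ℓt z) z'⟫
          ≤ 0}.indicator
        (fun z' => w (graphMk d z' (ℓ z' - ℓt z')) * omegaW d (fun z => ℓ z - ℓt z) z') x')

/-- The outward flux of `q H` through the upper and lower boundary graphs of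
`graphDomain d ρ₁ ℓ ℓt`. -/
def boundaryFlux (d : ℕ) (ρ₁ : ℝ) (ℓ ℓt : Esp d → ℝ) (H : Esp (d + 1) → Esp (d + 1))
    (q : Esp (d + 1) → ℝ) : ℝ :=
  (∫ z in ball 0 ρ₁, fluxWeight d ℓ (nuUp d ℓ) H z * q (graphMk d z (ℓ z))) +
    ∫ z in ball 0 ρ₁, fluxWeight d (fun z => ℓ z - ℓt z) (nuDown d fun z => ℓ z - ℓt z) H z *
      q (graphMk d z (ℓ z - ℓt z))

section Boundary

variable {d : ℕ} {ρ₁ N : ℝ} {ℓ ℓt : Esp d → ℝ} {H : Esp (d + 1) → Esp (d + 1)} {q : Esp (d + 1) → ℝ}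

theorem inflowIntegral_nonneg (hq : ∀ x, 0 ≤ q x) : 0 ≤ inflowIntegral d ρ₁ ℓ ℓt H q :=
  integral_nonneg fun z => add_nonneg
    (indicator_nonneg (fun _ _ => mul_nonneg (hq _) (omegaW_pos _ _).le) z)
    (indicator_nonneg (fun _ _ => mul_nonneg (hq _) (omegaW_pos _ _).le) z)

variable (hℓ : ContDiffOn ℝ 1 ℓ (closedBall 0 ρ₁)) (hℓt : ContDiffOn ℝ 1 ℓt (closedBall 0 ρ₁))
  (hpos : ∀ z, ‖z‖ < ρ₁ → 0 < ℓt z) (hH : ContinuousOn H (closure (graphDomain d ρ₁ ℓ ℓt)))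
include hℓ hℓt hpos hH

theorem inflowIntegral_eq (hq : ContinuousOn q (closure (graphDomain d ρ₁ ℓ ℓt))) :
    inflowIntegral d ρ₁ ℓ ℓt H q =
      (∫ z in ball 0 ρ₁, inflowWeight d ℓ (nuUp d ℓ) H z * q (graphMk d z (ℓ z))) +
        ∫ z in ball 0 ρ₁, inflowWeight d (fun z => ℓ z - ℓt z) (nuDown d fun z => ℓ z - ℓt z) H z *
          q (graphMk d z (ℓ z - ℓt z)) := by
  have hK := isCompact_closure_graphDomain hℓ.continuousOn hℓt.continuousOn
  have hup : MapsTo (fun z => graphMk d z (ℓ z)) (ball 0 ρ₁) (closure (graphDomain d ρ₁ ℓ ℓt)) :=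
    fun _ => graphMk_upper_mem_closure hpos
  have hlow : MapsTo (fun z => graphMk d z (ℓ z - ℓt z)) (ball 0 ρ₁)
    (closure (graphDomain d ρ₁ ℓ ℓt)) := fun _ => graphMk_lower_mem_closure hpos
  rw [← integral_add
    (integrableOn_mul_comp measurableSet_ball hK hq (continuousOn_graphMk_graph hℓ.continuousOn)
      hup (integrableOn_inflowWeight hℓ (continuousOn_nuUp hℓ) hH hup))
    (integrableOn_mul_comp measurableSet_ball hK hq
      (continuousOn_graphMk_graph (hℓ.sub hℓt).continuousOn) hlow
      (integrableOn_inflowWeight (hℓ.sub hℓt) (continuousOn_nuDown (hℓ.sub hℓt)) hH hlow))]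
  exact integral_congr_ae (ae_of_all _ fun z => congrArg₂ (· + ·)
    ((indicator_mul_right _ (fun z => q (graphMk d z (ℓ z))) _).trans (mul_comm _ _))
    ((indicator_mul_right _ (fun z => q (graphMk d z (ℓ z - ℓt z))) _).trans (mul_comm _ _)))

theorem neg_boundaryFlux_le (hN : ∀ x ∈ closure (graphDomain d ρ₁ ℓ ℓt), ‖H x‖ ≤ N)
    (hq : ContinuousOn q (closure (graphDomain d ρ₁ ℓ ℓt)))
    (hq0 : ∀ x ∈ closure (graphDomain d ρ₁ ℓ ℓt), 0 ≤ q x) :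
    -boundaryFlux d ρ₁ ℓ ℓt H q ≤ N * inflowIntegral d ρ₁ ℓ ℓt H q := by
  have hK := isCompact_closure_graphDomain hℓ.continuousOn hℓt.continuousOn
  rw [inflowIntegral_eq hℓ hℓt hpos hH hq, boundaryFlux, neg_add, mul_add]
  exact add_le_add
    (neg_setIntegral_fluxWeight_mul_le hℓ (continuousOn_nuUp hℓ) hH
      (fun _ => graphMk_upper_mem_closure hpos) hK (fun z => (norm_nuUp _ z).le) hN hq hq0)
    (neg_setIntegral_fluxWeight_mul_le (hℓ.sub hℓt) (continuousOn_nuDown (hℓ.sub hℓt)) hH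
      (fun _ => graphMk_lower_mem_closure hpos) hK (fun z => (norm_nuDown _ z).le) hN hq hq0)

variable {I : Set ℝ} {Q : Esp (d + 1) × ℝ → ℝ} (hI : IsCompact I)
  (hQ : ContinuousOn Q (closure (graphDomain d ρ₁ ℓ ℓt) ×ˢ I))
include hI hQ

theorem continuousOn_boundaryFlux :
    ContinuousOn (fun t => boundaryFlux d ρ₁ ℓ ℓt H fun x => Q (x, t)) I := by
  have hK := isCompact_closure_graphDomain hℓ.continuousOn hℓt.continuousOn
  obtain ⟨N, hN⟩ := hK.exists_bound_of_continuousOn hH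
  exact (continuousOn_setIntegral_mul_comp measurableSet_ball hK hI hQ
      (continuousOn_graphMk_graph hℓ.continuousOn) (fun _ => graphMk_upper_mem_closure hpos)
      (integrableOn_fluxWeight hℓ (continuousOn_nuUp hℓ) hH
        (fun _ => graphMk_upper_mem_closure hpos) (fun z => (norm_nuUp _ z).le) hN)).add
    (continuousOn_setIntegral_mul_comp measurableSet_ball hK hI hQ
      (continuousOn_graphMk_graph (hℓ.sub hℓt).continuousOn)
      (fun _ => graphMk_lower_mem_closure hpos)
      (integrableOn_fluxWeight (hℓ.sub hℓt) (continuousOn_nuDown (hℓ.sub hℓt)) hH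
        (fun _ => graphMk_lower_mem_closure hpos) (fun z => (norm_nuDown _ z).le) hN))

theorem continuousOn_inflowIntegral :
    ContinuousOn (fun t => inflowIntegral d ρ₁ ℓ ℓt H fun x => Q (x, t)) I := by
  have hK := isCompact_closure_graphDomain hℓ.continuousOn hℓt.continuousOn
  refine ((continuousOn_setIntegral_mul_comp measurableSet_ball hK hI hQ
      (continuousOn_graphMk_graph hℓ.continuousOn) (fun _ => graphMk_upper_mem_closure hpos)
      (integrableOn_inflowWeight hℓ (continuousOn_nuUp hℓ) hH
        fun _ => graphMk_upper_mem_closure hpos)).add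
    (continuousOn_setIntegral_mul_comp measurableSet_ball hK hI hQ
      (continuousOn_graphMk_graph (hℓ.sub hℓt).continuousOn)
      (fun _ => graphMk_lower_mem_closure hpos)
      (integrableOn_inflowWeight (hℓ.sub hℓt) (continuousOn_nuDown (hℓ.sub hℓt)) hH
        fun _ => graphMk_lower_mem_closure hpos))).congr fun t ht => ?_
  exact inflowIntegral_eq hℓ hℓt hpos hH (continuousOn_slice_fst hQ ht)

end Boundary

/-- The cutoff of `graphDomain d ρ₁ ℓ ℓt` which vanishes at vertical distance at most `ε` from the
graphs of `ℓ` and `ℓ - ℓt` and is `1` at vertical distance at least `2ε`. -/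
def graphCutoff (d : ℕ) (ρ₁ : ℝ) (ℓ ℓt : Esp d → ℝ) (ε : ℝ) : Esp (d + 1) → ℝ :=
  (headL d ⁻¹' ball 0 ρ₁).indicator fun x =>
    smoothStep ((ℓ (headL d x) - lastL d x) / ε) *
      smoothStep ((lastL d x - (ℓ (headL d x) - ℓt (headL d x))) / ε)

/-- The points of the closed cylinder over `closedBall 0 ρ₁` which lie at vertical distance at
least `ε` below the graph of `ℓ` and above the graph of `ℓ - ℓt`. -/
def graphCore (d : ℕ) (ρ₁ : ℝ) (ℓ ℓt : Esp d → ℝ) (ε : ℝ) : Set (Esp (d + 1)) :=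
  {x | headL d x ∈ closedBall 0 ρ₁ ∧ ε ≤ ℓ (headL d x) - lastL d x ∧
    ε ≤ lastL d x - (ℓ (headL d x) - ℓt (headL d x))}

section Cutoff

variable {d : ℕ} {ρ₁ ε : ℝ} {ℓ ℓt : Esp d → ℝ}

theorem graphCutoff_nonneg (x : Esp (d + 1)) : 0 ≤ graphCutoff d ρ₁ ℓ ℓt ε x :=
  indicator_nonneg (fun _ _ => mul_nonneg (smoothStep_nonneg _) (smoothStep_nonneg _)) x

theorem graphCutoff_le_one (x : Esp (d + 1)) : graphCutoff d ρ₁ ℓ ℓt ε x ≤ 1 :=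
  indicator_apply_le' (fun _ => mul_le_one₀ (smoothStep_le_one _) (smoothStep_nonneg _)
    (smoothStep_le_one _)) fun _ => zero_le_one

theorem tendsto_graphCutoff {x : Esp (d + 1)} (hx : x ∈ graphDomain d ρ₁ ℓ ℓt) :
    Tendsto (fun ε => graphCutoff d ρ₁ ℓ ℓt ε x) (𝓝[>] 0) (𝓝 1) := by
  obtain ⟨hz, hlow, hup⟩ := mem_graphDomain.1 hx
  have hone : ∀ {r : ℝ}, 0 < r → ∀ᶠ ε : ℝ in 𝓝[>] 0, smoothStep (r / ε) = 1 := fun {r} hr => by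
    filter_upwards [Ioo_mem_nhdsGT (half_pos hr)] with ε hε
    exact smoothStep_of_two_le ((le_div_iff₀ hε.1).2 (by linarith [hε.2]))
  refine tendsto_const_nhds.congr' ?_
  filter_upwards [hone (sub_pos.2 hup), hone (sub_pos.2 hlow)] with ε h₁ h₂
  have hz' : x ∈ headL d ⁻¹' ball (0 : Esp d) ρ₁ := mem_ball_zero_iff.2 hz
  rw [graphCutoff, indicator_of_mem hz', h₁, h₂, one_mul]

theorem graphCutoff_eventuallyEq {x : Esp (d + 1)} (hx : headL d x ∈ ball (0 : Esp d) ρ₁) :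
    graphCutoff d ρ₁ ℓ ℓt ε =ᶠ[𝓝 x] fun x =>
      smoothStep ((ℓ (headL d x) - lastL d x) / ε) *
        smoothStep ((lastL d x - (ℓ (headL d x) - ℓt (headL d x))) / ε) :=
  eventually_of_mem ((isOpen_ball.preimage (headL d).continuous).mem_nhds hx)
    fun _ hz => indicator_of_mem hz _

theorem support_graphCutoff_subset (hε : 0 < ε) :
    Function.support (graphCutoff d ρ₁ ℓ ℓt ε) ⊆ graphCore d ρ₁ ℓ ℓt ε := by
  intro x hx
  have hle : ∀ {r : ℝ}, smoothStep (r / ε) ≠ 0 → ε ≤ r := fun {r} h => by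
    by_contra! hr
    exact h (smoothStep_of_le_one ((div_le_one hε).2 hr.le))
  rw [graphCutoff, support_indicator] at hx
  exact ⟨ball_subset_closedBall hx.1, hle (left_ne_zero_of_mul hx.2),
    hle (right_ne_zero_of_mul hx.2)⟩

theorem graphCore_subset (hℓt0 : ∀ z, ‖z‖ = ρ₁ → ℓt z = 0) (hε : 0 < ε) :
    graphCore d ρ₁ ℓ ℓt ε ⊆ graphDomain d ρ₁ ℓ ℓt := by
  rintro x ⟨hz, hup, hlow⟩
  refine mem_graphDomain.2
    ⟨(mem_closedBall_zero_iff.1 hz).lt_of_ne fun h => ?_, by linarith, by linarith⟩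
  linarith [hℓt0 _ h]

theorem isClosed_graphCore (hℓ : ContinuousOn ℓ (closedBall 0 ρ₁))
    (hℓt : ContinuousOn ℓt (closedBall 0 ρ₁)) (ε : ℝ) : IsClosed (graphCore d ρ₁ ℓ ℓt ε) := by
  have hA : IsClosed (headL d ⁻¹' closedBall (0 : Esp d) ρ₁) :=
    isClosed_closedBall.preimage (headL d).continuous
  have cℓ : ContinuousOn (fun x => ℓ (headL d x)) (headL d ⁻¹' closedBall (0 : Esp d) ρ₁) :=
    hℓ.comp (headL d).continuous.continuousOn fun x hx => hx
  have cℓt : ContinuousOn (fun x => ℓt (headL d x)) (headL d ⁻¹' closedBall (0 : Esp d) ρ₁) :=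
    hℓt.comp (headL d).continuous.continuousOn fun x hx => hx
  have clast : ContinuousOn (fun x => lastL d x) (headL d ⁻¹' closedBall (0 : Esp d) ρ₁) :=
    (lastL d).continuous.continuousOn
  convert ((cℓ.sub clast).preimage_isClosed_of_isClosed hA (isClosed_Ici (a := ε))).inter
    ((clast.sub (cℓ.sub cℓt)).preimage_isClosed_of_isClosed hA (isClosed_Ici (a := ε))) using 1
  ext x
  exact and_and_left

section Regularity

variable (hℓ : ContDiffOn ℝ 1 ℓ (closedBall 0 ρ₁)) (hℓt : ContDiffOn ℝ 1 ℓt (closedBall 0 ρ₁))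
include hℓ hℓt

theorem fderiv_graphCutoff_apply {z : Esp d} (hz : ‖z‖ < ρ₁) (s ε : ℝ) (h : Esp (d + 1)) :
    fderiv ℝ (graphCutoff d ρ₁ ℓ ℓt ε) (graphMk d z s) h =
      -(upperKernel ε (ℓ z - ℓt z) (ℓ z) s * (omegaW d ℓ z * ⟪h, nuUp d ℓ z⟫) +
        lowerKernel ε (ℓ z - ℓt z) (ℓ z) s *
          (omegaW d (fun z => ℓ z - ℓt z) z * ⟪h, nuDown d (fun z => ℓ z - ℓt z) z⟫)) := by
  have hz' := closedBall_mem_nhds_of_norm_lt hz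
  have dℓ : HasFDerivAt ℓ (fderiv ℝ ℓ z) (headL d (graphMk d z s)) := by
    rw [headL_graphMk]
    exact ((hℓ.contDiffAt hz').differentiableAt one_ne_zero).hasFDerivAt
  have dm : HasFDerivAt (fun z => ℓ z - ℓt z) (fderiv ℝ (fun z => ℓ z - ℓt z) z)
      (headL d (graphMk d z s)) := by
    rw [headL_graphMk]
    exact (((hℓ.sub hℓt).contDiffAt hz').differentiableAt one_ne_zero).hasFDerivAt
  have dlast : HasFDerivAt (fun x => lastL d x) (lastL d) (graphMk d z s) := (lastL d).hasFDerivAt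
  have dup := (hasDerivAt_smoothStep _).comp_hasFDerivAt _
    (((dℓ.comp _ (headL d).hasFDerivAt).sub dlast).mul_const ε⁻¹)
  have dlow := (hasDerivAt_smoothStep _).comp_hasFDerivAt _
    ((dlast.sub (dm.comp _ (headL d).hasFDerivAt)).mul_const ε⁻¹)
  have hχ : graphCutoff d ρ₁ ℓ ℓt ε =ᶠ[𝓝 (graphMk d z s)] fun x =>
      smoothStep ((ℓ (headL d x) - lastL d x) * ε⁻¹) *
        smoothStep ((lastL d x - (ℓ (headL d x) - ℓt (headL d x))) * ε⁻¹) :=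
    graphCutoff_eventuallyEq (by simpa using hz)
  rw [((dup.mul dlow).congr_of_eventuallyEq hχ).fderiv, nuDown_eq_neg_nuUp, Pi.neg_apply,
    inner_neg_right, mul_neg, omegaW_mul_inner_nuUp, omegaW_mul_inner_nuUp]
  simp [upperKernel, lowerKernel, div_eq_mul_inv]
  ring

variable (hℓt0 : ∀ z, ‖z‖ = ρ₁ → ℓt z = 0) (hε : 0 < ε)
include hℓt0 hε

theorem tsupport_graphCutoff_subset :
    tsupport (graphCutoff d ρ₁ ℓ ℓt ε) ⊆ graphDomain d ρ₁ ℓ ℓt :=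
  (closure_minimal (support_graphCutoff_subset hε)
    (isClosed_graphCore hℓ.continuousOn hℓt.continuousOn ε)).trans (graphCore_subset hℓt0 hε)

theorem hasCompactSupport_graphCutoff : HasCompactSupport (graphCutoff d ρ₁ ℓ ℓt ε) :=
  (isCompact_closure_graphDomain hℓ.continuousOn hℓt.continuousOn).of_isClosed_subset
    (isClosed_tsupport _) ((tsupport_graphCutoff_subset hℓ hℓt hℓt0 hε).trans subset_closure)

theorem contDiff_graphCutoff : ContDiff ℝ 1 (graphCutoff d ρ₁ ℓ ℓt ε) := by
  refine contDiff_iff_contDiffAt.2 fun x => ?_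
  by_cases hx : x ∈ tsupport (graphCutoff d ρ₁ ℓ ℓt ε)
  · have hz := (mem_graphDomain.1 (tsupport_graphCutoff_subset hℓ hℓt hℓt0 hε hx)).1
    have hz' := closedBall_mem_nhds_of_norm_lt hz
    have cℓ : ContDiffAt ℝ 1 (fun x => ℓ (headL d x)) x :=
      (hℓ.contDiffAt hz').comp x (headL d).contDiff.contDiffAt
    have cℓt : ContDiffAt ℝ 1 (fun x => ℓt (headL d x)) x :=
      (hℓt.contDiffAt hz').comp x (headL d).contDiff.contDiffAt
    have clast : ContDiffAt ℝ 1 (fun x => lastL d x) x := (lastL d).contDiff.contDiffAt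
    exact ((contDiff_smoothStep.contDiffAt.comp x ((cℓ.sub clast).div_const ε)).mul
      (contDiff_smoothStep.contDiffAt.comp x ((clast.sub (cℓ.sub cℓt)).div_const ε)))
      |>.congr_of_eventuallyEq (graphCutoff_eventuallyEq (mem_ball_zero_iff.2 hz))
  · exact (contDiffAt_const (c := (0 : ℝ))).congr_of_eventuallyEq
      (notMem_tsupport_iff_eventuallyEq.1 hx)

end Regularity

end Cutoff

/-- The function `s ↦ ⟨H, ν⟩ ω q` on the vertical line over `z`, where `ν` and the area element `ω`
are those of the graph of `m` at `z`; at `s = m z` this is the flux density of `q H`. -/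
def verticalFlux (d : ℕ) (m : Esp d → ℝ) (ν : Esp d → Esp (d + 1)) (H : Esp (d + 1) → Esp (d + 1))
    (q : Esp (d + 1) → ℝ) (z : Esp d) (s : ℝ) : ℝ :=
  omegaW d m z * ⟪H (graphMk d z s), ν z⟫ * q (graphMk d z s)

/-- The flux of `q H` through the boundary graphs, averaged vertically over the layers of width
comparable to `ε` on which the cutoff `graphCutoff d ρ₁ ℓ ℓt ε` varies. -/
def layerFlux (d : ℕ) (ℓ ℓt : Esp d → ℝ) (H : Esp (d + 1) → Esp (d + 1))
    (q : Esp (d + 1) → ℝ) (ε : ℝ) (z : Esp d) : ℝ :=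
  (∫ s in Ioo (ℓ z - ℓt z) (ℓ z),
      upperKernel ε (ℓ z - ℓt z) (ℓ z) s * verticalFlux d ℓ (nuUp d ℓ) H q z s) +
    ∫ s in Ioo (ℓ z - ℓt z) (ℓ z), lowerKernel ε (ℓ z - ℓt z) (ℓ z) s *
      verticalFlux d (fun z => ℓ z - ℓt z) (nuDown d fun z => ℓ z - ℓt z) H q z s

section VerticalFlux

variable {d : ℕ} {m : Esp d → ℝ} {ν : Esp d → Esp (d + 1)} {H : Esp (d + 1) → Esp (d + 1)}
  {q : Esp (d + 1) → ℝ} {z : Esp d} {K : Set (Esp (d + 1))} {J : Set ℝ} {s N c : ℝ}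

theorem continuousOn_verticalFlux (hH : ContinuousOn H K) (hq : ContinuousOn q K)
    (hJ : MapsTo (graphMk d z) J K) : ContinuousOn (verticalFlux d m ν H q z) J := by
  have hline : ContinuousOn (graphMk d z) J :=
    ((continuous_graphMk d).comp (Continuous.prodMk_right z)).continuousOn
  exact (continuousOn_const.mul ((hH.comp hline hJ).inner continuousOn_const)).mul
    (hq.comp hline hJ)

theorem abs_verticalFlux_le (hν : ‖ν z‖ ≤ 1) (hN : ‖H (graphMk d z s)‖ ≤ N)
    (hc : |q (graphMk d z s)| ≤ c) : |verticalFlux d m ν H q z s| ≤ omegaW d m z * N * c := by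
  have hω := (omegaW_pos m z).le
  have hinner : |⟪H (graphMk d z s), ν z⟫| ≤ N :=
    (abs_real_inner_le_norm _ _).trans ((mul_le_of_le_one_right (norm_nonneg _) hν).trans hN)
  rw [verticalFlux, abs_mul, abs_mul, abs_of_nonneg hω]
  exact mul_le_mul (mul_le_mul_of_nonneg_left hinner hω) hc (abs_nonneg _)
    (mul_nonneg hω ((abs_nonneg _).trans hinner))

end VerticalFlux

section LayerFlux

variable {d : ℕ} {ρ₁ ε N c : ℝ} {ℓ ℓt : Esp d → ℝ} {H : Esp (d + 1) → Esp (d + 1)}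
  {q : Esp (d + 1) → ℝ} {z : Esp d}

section Pointwise

variable (hpos : ∀ z, ‖z‖ < ρ₁ → 0 < ℓt z) (hz : z ∈ ball (0 : Esp d) ρ₁)
include hpos hz

theorem abs_layerFlux_le (hε : 0 < ε)
    (hN : ∀ x ∈ closure (graphDomain d ρ₁ ℓ ℓt), ‖H x‖ ≤ N)
    (hc : ∀ x ∈ closure (graphDomain d ρ₁ ℓ ℓt), |q x| ≤ c) :
    |layerFlux d ℓ ℓt H q ε z| ≤ (omegaW d ℓ z + omegaW d (fun z => ℓ z - ℓt z) z) * N * c := by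
  have hG := graphMk_upper_mem_closure (ℓ := ℓ) hpos hz
  have hN0 : 0 ≤ N := (norm_nonneg _).trans (hN _ hG)
  have hc0 : 0 ≤ c := (abs_nonneg _).trans (hc _ hG)
  have hbound : ∀ (m : Esp d → ℝ) (ν : Esp d → Esp (d + 1)), ‖ν z‖ = 1 →
      ∀ s ∈ Icc (ℓ z - ℓt z) (ℓ z), |verticalFlux d m ν H q z s| ≤ omegaW d m z * N * c :=
    fun m ν hν s hs => abs_verticalFlux_le hν.le (hN _ (graphMk_mem_closure_graphDomain hpos hz hs))
      (hc _ (graphMk_mem_closure_graphDomain hpos hz hs))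
  have hnonneg : ∀ m : Esp d → ℝ, 0 ≤ omegaW d m z * N * c :=
    fun m => mul_nonneg (mul_nonneg (omegaW_pos m z).le hN0) hc0
  rw [add_mul, add_mul]
  exact (abs_add_le _ _).trans (add_le_add
    (abs_setIntegral_upperKernel_mul_le hε (hnonneg _) (hbound _ _ (norm_nuUp _ z)))
    (abs_setIntegral_lowerKernel_mul_le hε (hnonneg _) (hbound _ _ (norm_nuDown _ z))))

variable (hH : ContinuousOn H (closure (graphDomain d ρ₁ ℓ ℓt)))
  (hq : ContinuousOn q (closure (graphDomain d ρ₁ ℓ ℓt)))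
include hH hq

theorem tendsto_layerFlux :
    Tendsto (fun ε => layerFlux d ℓ ℓt H q ε z) (𝓝[>] 0)
      (𝓝 (fluxWeight d ℓ (nuUp d ℓ) H z * q (graphMk d z (ℓ z)) +
        fluxWeight d (fun z => ℓ z - ℓt z) (nuDown d fun z => ℓ z - ℓt z) H z *
          q (graphMk d z (ℓ z - ℓt z)))) := by
  have hlt : ℓ z - ℓt z < ℓ z := sub_lt_self _ (hpos z (mem_ball_zero_iff.1 hz))
  have hline : MapsTo (graphMk d z) (Icc (ℓ z - ℓt z) (ℓ z)) (closure (graphDomain d ρ₁ ℓ ℓt)) :=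
    fun _ => graphMk_mem_closure_graphDomain hpos hz
  exact (tendsto_setIntegral_upperKernel_mul hlt (continuousOn_verticalFlux hH hq hline)).add
    (tendsto_setIntegral_lowerKernel_mul hlt (continuousOn_verticalFlux hH hq hline))

theorem setIntegral_fderiv_graphCutoff_graphMk (hℓ : ContDiffOn ℝ 1 ℓ (closedBall 0 ρ₁))
    (hℓt : ContDiffOn ℝ 1 ℓt (closedBall 0 ρ₁)) (ε : ℝ) :
    ∫ s in Ioo (ℓ z - ℓt z) (ℓ z), fderiv ℝ (graphCutoff d ρ₁ ℓ ℓt ε) (graphMk d z s)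
        (H (graphMk d z s)) * q (graphMk d z s) = -layerFlux d ℓ ℓt H q ε z := by
  have hline : MapsTo (graphMk d z) (Icc (ℓ z - ℓt z) (ℓ z)) (closure (graphDomain d ρ₁ ℓ ℓt)) :=
    fun _ => graphMk_mem_closure_graphDomain hpos hz
  have hint : ∀ (k : ℝ → ℝ), Continuous k → ∀ (m : Esp d → ℝ) (ν : Esp d → Esp (d + 1)),
      IntegrableOn (fun s => k s * verticalFlux d m ν H q z s) (Ioo (ℓ z - ℓt z) (ℓ z)) :=
    fun k hk m ν => ((hk.continuousOn.mul
      (continuousOn_verticalFlux hH hq hline)).integrableOn_compact isCompact_Icc).mono_set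
      Ioo_subset_Icc_self
  rw [layerFlux, ← integral_add (hint _ (continuous_upperKernel _ _ _) _ _)
    (hint _ (continuous_lowerKernel _ _ _) _ _), ← integral_neg]
  refine integral_congr_ae (ae_of_all _ fun s => ?_)
  simp only [fderiv_graphCutoff_apply hℓ hℓt (mem_ball_zero_iff.1 hz), verticalFlux]
  ring

end Pointwise

theorem integrableOn_omegaW_add_mul (hℓ : ContDiffOn ℝ 1 ℓ (closedBall 0 ρ₁))
    (hℓt : ContDiffOn ℝ 1 ℓt (closedBall 0 ρ₁)) (N c : ℝ) :
    IntegrableOn (fun z => (omegaW d ℓ z + omegaW d (fun z => ℓ z - ℓt z) z) * N * c)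
      (ball 0 ρ₁) :=
  (((integrableOn_omegaW hℓ).add (integrableOn_omegaW (hℓ.sub hℓt))).mul_const N).mul_const c

variable (hℓ : ContDiffOn ℝ 1 ℓ (closedBall 0 ρ₁)) (hℓt : ContDiffOn ℝ 1 ℓt (closedBall 0 ρ₁))
  (hpos : ∀ z, ‖z‖ < ρ₁ → 0 < ℓt z) (hℓt0 : ∀ z, ‖z‖ = ρ₁ → ℓt z = 0)
  (hH : ContinuousOn H (closure (graphDomain d ρ₁ ℓ ℓt)))
  (hq : ContinuousOn q (closure (graphDomain d ρ₁ ℓ ℓt)))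
include hℓ hℓt hpos hℓt0 hH hq

theorem integrableOn_layerFlux_and_setIntegral_fderiv_graphCutoff (hε : 0 < ε) :
    IntegrableOn (layerFlux d ℓ ℓt H q ε) (ball 0 ρ₁) ∧
      ∫ x in graphDomain d ρ₁ ℓ ℓt, fderiv ℝ (graphCutoff d ρ₁ ℓ ℓt ε) x (H x) * q x =
        -∫ z in ball (0 : Esp d) ρ₁, layerFlux d ℓ ℓt H q ε z := by
  have hDo := isOpen_graphDomain hℓ.continuousOn hℓt.continuousOn
  have hs := tsupport_graphCutoff_subset hℓ hℓt hℓt0 hε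
  have hG := integrableOn_mul_of_hasCompactSupport (μ := volume) hDo
    (continuous_fderiv_apply_of_tsupport_subset hDo (hH.mono subset_closure)
      (contDiff_graphCutoff hℓ hℓt hℓt0 hε) hs)
    ((hasCompactSupport_graphCutoff hℓ hℓt hℓt0 hε).of_isClosed_subset (isClosed_tsupport _)
      tsupport_fderiv_apply_field_subset)
    (tsupport_fderiv_apply_field_subset.trans hs) (hq.mono subset_closure)
  have hslice : EqOn (fun z => ∫ s in Ioo (ℓ z - ℓt z) (ℓ z), fderiv ℝ (graphCutoff d ρ₁ ℓ ℓt ε)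
      (graphMk d z s) (H (graphMk d z s)) * q (graphMk d z s))
      (fun z => -layerFlux d ℓ ℓt H q ε z) (ball 0 ρ₁) := fun z hz =>
    setIntegral_fderiv_graphCutoff_graphMk hpos hz hH hq hℓ hℓt ε
  constructor
  · exact ((integrableOn_setIntegral_graphMk hDo.measurableSet hG).congr_fun hslice
      measurableSet_ball).neg.congr_fun (fun _ _ => neg_neg _) measurableSet_ball
  · rw [setIntegral_graphDomain hDo.measurableSet hG,
      setIntegral_congr_fun measurableSet_ball hslice, integral_neg]

theorem abs_setIntegral_fderiv_graphCutoff_le (hε : 0 < ε)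
    (hN : ∀ x ∈ closure (graphDomain d ρ₁ ℓ ℓt), ‖H x‖ ≤ N)
    (hc : ∀ x ∈ closure (graphDomain d ρ₁ ℓ ℓt), |q x| ≤ c) :
    |∫ x in graphDomain d ρ₁ ℓ ℓt, fderiv ℝ (graphCutoff d ρ₁ ℓ ℓt ε) x (H x) * q x| ≤
      ∫ z in ball (0 : Esp d) ρ₁, (omegaW d ℓ z + omegaW d (fun z => ℓ z - ℓt z) z) * N * c := by
  rw [(integrableOn_layerFlux_and_setIntegral_fderiv_graphCutoff hℓ hℓt hpos hℓt0 hH hq hε).2,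
    abs_neg]
  exact norm_integral_le_of_norm_le (f := layerFlux d ℓ ℓt H q ε)
    (integrableOn_omegaW_add_mul hℓ hℓt N c)
    ((ae_restrict_iff' measurableSet_ball).2 (ae_of_all _ fun z hz =>
      abs_layerFlux_le hpos hz hε hN hc))

theorem tendsto_setIntegral_fderiv_graphCutoff :
    Tendsto (fun ε => ∫ x in graphDomain d ρ₁ ℓ ℓt,
        fderiv ℝ (graphCutoff d ρ₁ ℓ ℓt ε) x (H x) * q x) (𝓝[>] 0)
      (𝓝 (-boundaryFlux d ρ₁ ℓ ℓt H q)) := by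
  have hK := isCompact_closure_graphDomain hℓ.continuousOn hℓt.continuousOn
  obtain ⟨N, hN⟩ := hK.exists_bound_of_continuousOn hH
  obtain ⟨c, hc⟩ := hK.exists_bound_of_continuousOn hq
  have hup : MapsTo (fun z => graphMk d z (ℓ z)) (ball 0 ρ₁) (closure (graphDomain d ρ₁ ℓ ℓt)) :=
    fun _ => graphMk_upper_mem_closure hpos
  have hlow : MapsTo (fun z => graphMk d z (ℓ z - ℓt z)) (ball 0 ρ₁)
    (closure (graphDomain d ρ₁ ℓ ℓt)) := fun _ => graphMk_lower_mem_closure hpos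
  have hfub := fun ε (hε : 0 < ε) =>
    integrableOn_layerFlux_and_setIntegral_fderiv_graphCutoff hℓ hℓt hpos hℓt0 hH hq hε
  rw [boundaryFlux, ← integral_add
    (integrableOn_mul_comp measurableSet_ball hK hq (continuousOn_graphMk_graph hℓ.continuousOn)
      hup (integrableOn_fluxWeight hℓ (continuousOn_nuUp hℓ) hH hup
        (fun z => (norm_nuUp _ z).le) hN))
    (integrableOn_mul_comp measurableSet_ball hK hq
      (continuousOn_graphMk_graph (hℓ.sub hℓt).continuousOn) hlow
      (integrableOn_fluxWeight (hℓ.sub hℓt) (continuousOn_nuDown (hℓ.sub hℓt)) hH hlow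
        (fun z => (norm_nuDown _ z).le) hN))]
  refine Tendsto.congr' (eventually_mem_nhdsWithin.mono fun ε hε => (hfub ε hε).2.symm)
    (Tendsto.neg ?_)
  refine tendsto_integral_filter_of_dominated_convergence _
    (eventually_mem_nhdsWithin.mono fun ε hε => (hfub ε hε).1.aestronglyMeasurable)
    (eventually_mem_nhdsWithin.mono fun ε hε => ?_)
    (integrableOn_omegaW_add_mul hℓ hℓt N c) ?_
  · exact (ae_restrict_iff' measurableSet_ball).2 (ae_of_all _ fun z hz =>
      abs_layerFlux_le hpos hz hε hN hc)
  · exact (ae_restrict_iff' measurableSet_ball).2 (ae_of_all _ fun z hz =>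
      tendsto_layerFlux hpos hz hH hq)

end LayerFlux

section GraphDomainInequality

variable {d : ℕ} {ρ₁ a b : ℝ} {ℓ ℓt : Esp d → ℝ} {H : Esp (d + 1) → Esp (d + 1)}
  {Q : Esp (d + 1) × ℝ → ℝ} {g : Esp (d + 1) → ℝ}
  (hℓ : ContDiffOn ℝ 1 ℓ (closedBall 0 ρ₁)) (hℓt : ContDiffOn ℝ 1 ℓt (closedBall 0 ρ₁))
  (hℓt0 : ∀ z, ‖z‖ = ρ₁ → ℓt z = 0)
include hℓ hℓt hℓt0

theorem tendsto_setIntegral_graphCutoff_mul (hg : IntegrableOn g (graphDomain d ρ₁ ℓ ℓt)) :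
    Tendsto (fun ε => ∫ x in graphDomain d ρ₁ ℓ ℓt, graphCutoff d ρ₁ ℓ ℓt ε x * g x) (𝓝[>] 0)
      (𝓝 (∫ x in graphDomain d ρ₁ ℓ ℓt, g x)) := by
  have hD := (isOpen_graphDomain hℓ.continuousOn hℓt.continuousOn).measurableSet
  refine tendsto_integral_filter_of_dominated_convergence (fun x => ‖g x‖)
    (eventually_mem_nhdsWithin.mono fun ε hε =>
      (contDiff_graphCutoff hℓ hℓt hℓt0 hε).continuous.aestronglyMeasurable.mul
        hg.aestronglyMeasurable)
    (Eventually.of_forall fun ε => ae_of_all _ fun x => ?_) hg.norm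
    ((ae_restrict_iff' hD).2 (ae_of_all _ fun x hx => ?_))
  · rw [norm_mul, Real.norm_of_nonneg (graphCutoff_nonneg x)]
    exact mul_le_of_le_one_left (norm_nonneg _) (graphCutoff_le_one x)
  · simpa using (tendsto_graphCutoff hx).mul_const (g x)

variable (hpos : ∀ z, ‖z‖ < ρ₁ → 0 < ℓt z)
  (hHc : ContinuousOn H (closure (graphDomain d ρ₁ ℓ ℓt))) (hab : a ≤ b)
  (hQc : ContinuousOn Q (closure (graphDomain d ρ₁ ℓ ℓt) ×ˢ Icc a b))
include hpos hHc hab hQc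

theorem tendsto_integral_setIntegral_fderiv_graphCutoff :
    Tendsto (fun ε => ∫ t in a..b, ∫ x in graphDomain d ρ₁ ℓ ℓt,
        fderiv ℝ (graphCutoff d ρ₁ ℓ ℓt ε) x (H x) * Q (x, t)) (𝓝[>] 0)
      (𝓝 (∫ t in a..b, -boundaryFlux d ρ₁ ℓ ℓt H fun x => Q (x, t))) := by
  have hD := isOpen_graphDomain hℓ.continuousOn hℓt.continuousOn
  have hK := isCompact_closure_graphDomain hℓ.continuousOn hℓt.continuousOn
  obtain ⟨N, hN⟩ := hK.exists_bound_of_continuousOn hHc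
  obtain ⟨c, hc⟩ := (hK.prod isCompact_Icc).exists_bound_of_continuousOn hQc
  have hI : uIoc a b ⊆ Icc a b := (uIoc_of_le hab).trans_subset Ioc_subset_Icc_self
  refine intervalIntegral.tendsto_integral_filter_of_dominated_convergence (fun _ => _)
    (eventually_mem_nhdsWithin.mono fun ε hε => ?_)
    (eventually_mem_nhdsWithin.mono fun ε hε => ae_of_all _ fun t ht =>
      abs_setIntegral_fderiv_graphCutoff_le hℓ hℓt hpos hℓt0 hHc
        (continuousOn_slice_fst hQc (hI ht)) hε hN fun x hx => hc _ ⟨hx, hI ht⟩)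
    intervalIntegrable_const
    (ae_of_all _ fun t ht =>
      tendsto_setIntegral_fderiv_graphCutoff hℓ hℓt hpos hℓt0 hHc
        (continuousOn_slice_fst hQc (hI ht)))
  have hχ := contDiff_graphCutoff hℓ hℓt hℓt0 hε
  have hχs := tsupport_graphCutoff_subset hℓ hℓt hℓt0 hε
  have hkernel := (continuous_fderiv_apply_of_tsupport_subset hD (hHc.mono subset_closure) hχ
    hχs).integrable_of_hasCompactSupport (μ := volume)
      ((hasCompactSupport_graphCutoff hℓ hℓt hℓt0 hε).mono'
        (subset_closure.trans tsupport_fderiv_apply_field_subset))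
  exact ((continuousOn_setIntegral_mul_comp hD.measurableSet hK isCompact_Icc hQc continuousOn_id
    subset_closure hkernel.integrableOn).mono hI).aestronglyMeasurable measurableSet_uIoc

variable {N : ℝ} (hN : ∀ x ∈ closure (graphDomain d ρ₁ ℓ ℓt), ‖H x‖ ≤ N)
  (hQ0 : ∀ x ∈ closure (graphDomain d ρ₁ ℓ ℓt), ∀ t ∈ Icc a b, 0 ≤ Q (x, t))
include hN hQ0

omit hℓt0 in
theorem integral_neg_boundaryFlux_le :
    ∫ t in a..b, -boundaryFlux d ρ₁ ℓ ℓt H (fun x => Q (x, t)) ≤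
      N * ∫ t in a..b, inflowIntegral d ρ₁ ℓ ℓt H fun x => Q (x, t) := by
  rw [← intervalIntegral.integral_const_mul]
  exact intervalIntegral.integral_mono_on hab
    ((continuousOn_boundaryFlux hℓ hℓt hpos hHc isCompact_Icc hQc).neg.intervalIntegrable_of_Icc
      hab)
    (((continuousOn_inflowIntegral hℓ hℓt hpos hHc isCompact_Icc
      hQc).intervalIntegrable_of_Icc hab).const_mul N)
    fun t ht => neg_boundaryFlux_le hℓ hℓt hpos hHc hN
      (continuousOn_slice_fst hQc ht) fun x hx => hQ0 x hx t ht

theorem setIntegral_graphDomain_le_of_transport_le {κ : ℝ} {F : Esp (d + 1) → ℝ}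
    (hH : ContDiffOn ℝ 1 H (graphDomain d ρ₁ ℓ ℓt))
    (hκ : ∀ x ∈ graphDomain d ρ₁ ℓ ℓt, divergence H x ≤ κ)
    (hF : IntegrableOn F (graphDomain d ρ₁ ℓ ℓt))
    (hQ : ContDiffOn ℝ 1 Q (graphDomain d ρ₁ ℓ ℓt ×ˢ Ioo a b))
    (hle : ∀ x ∈ graphDomain d ρ₁ ℓ ℓt, ∀ t ∈ Ioo a b,
      fderiv ℝ Q (x, t) (H x, 1) ≤ F x - κ * Q (x, t)) :
    ∫ x in graphDomain d ρ₁ ℓ ℓt, Q (x, b) ≤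
      (∫ x in graphDomain d ρ₁ ℓ ℓt, Q (x, a)) + (b - a) * (∫ x in graphDomain d ρ₁ ℓ ℓt, F x) +
        N * ∫ t in a..b, inflowIntegral d ρ₁ ℓ ℓt H fun x => Q (x, t) := by
  have hD := isOpen_graphDomain hℓ.continuousOn hℓt.continuousOn
  have hK := isCompact_closure_graphDomain hℓ.continuousOn hℓt.continuousOn
  have hlim : ∀ t ∈ Icc a b, Tendsto (fun ε => ∫ x in graphDomain d ρ₁ ℓ ℓt,
      graphCutoff d ρ₁ ℓ ℓt ε x * Q (x, t)) (𝓝[>] 0)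
      (𝓝 (∫ x in graphDomain d ρ₁ ℓ ℓt, Q (x, t))) := fun t ht =>
    tendsto_setIntegral_graphCutoff_mul hℓ hℓt hℓt0 <|
      ((continuousOn_slice_fst hQc ht).integrableOn_compact hK).mono_set subset_closure
  refine (le_of_tendsto_of_tendsto (hlim b (right_mem_Icc.2 hab))
    (((hlim a (left_mem_Icc.2 hab)).add
      ((tendsto_setIntegral_graphCutoff_mul hℓ hℓt hℓt0 hF).const_mul (b - a))).add
      (tendsto_integral_setIntegral_fderiv_graphCutoff hℓ hℓt hℓt0 hpos hHc hab hQc))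
    (eventually_mem_nhdsWithin.mono fun ε hε => setIntegral_mul_le_of_transport_le hD hK hH hκ hF
      hab hQc hQ (fun x hx t ht => hQ0 x (subset_closure hx) t (Ioo_subset_Icc_self ht)) hle
      (contDiff_graphCutoff hℓ hℓt hℓt0 hε) (hasCompactSupport_graphCutoff hℓ hℓt hℓt0 hε)
      (tsupport_graphCutoff_subset hℓ hℓt hℓt0 hε) graphCutoff_nonneg)).trans ?_
  exact add_le_add_right (integral_neg_boundaryFlux_le hℓ hℓt hpos hHc hab hQc hN hQ0) _

end GraphDomainInequality

/-- The partial derivative of `Y` in its last variable, one-sided where the time set `I` ends. -/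
def timeDeriv {E : Type*} (I : Set ℝ) (Y : E × ℝ → ℝ) (q : E × ℝ) : ℝ :=
  derivWithin (fun s => Y (q.1, s)) I q.2

theorem timeDeriv_eq_deriv {E : Type*} {I : Set ℝ} {Y : E × ℝ → ℝ} {x : E} {t : ℝ} (hI : I ∈ 𝓝 t) :
    timeDeriv I Y (x, t) = deriv (fun s => Y (x, s)) t :=
  derivWithin_of_mem_nhds hI

section TimeDerivative

variable {E : Type*} [NormedAddCommGroup E] [NormedSpace ℝ E] {Y : E × ℝ → ℝ} {K D : Set E}
  {I : Set ℝ} {x h : E} {t p : ℝ}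

theorem hasDerivWithinAt_slice_snd {A : E × ℝ →L[ℝ] ℝ}
    (hY : HasFDerivWithinAt Y A (K ×ˢ I) (x, t)) (hx : x ∈ K) :
    HasDerivWithinAt (fun s => Y (x, s)) (A (0, 1)) I t :=
  hY.comp_hasDerivWithinAt t ((hasDerivWithinAt_const t I x).prodMk (hasDerivWithinAt_id t I))
    fun _ hs => ⟨hx, hs⟩

theorem differentiableOn_slice_snd (hY : DifferentiableOn ℝ Y (K ×ˢ I)) (hx : x ∈ K) :
    DifferentiableOn ℝ (fun s => Y (x, s)) I := fun t ht =>
  (hasDerivWithinAt_slice_snd (hY (x, t) ⟨hx, ht⟩).hasFDerivWithinAt hx).differentiableWithinAt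

-- `K` need not have unique differentials, so `fderivWithin` is of no use on `K ×ˢ I`.
theorem continuousOn_timeDeriv (hI : UniqueDiffOn ℝ I) (hY : ContDiffOn ℝ 1 Y (K ×ˢ I)) :
    ContinuousOn (timeDeriv I Y) (K ×ˢ I) := by
  intro q hq
  obtain ⟨u, hu, -, -, A, hA, hAc⟩ := (contDiffWithinAt_succ_iff_hasFDerivWithinAt' (n := 0)
    (by simp)).1 (by simpa using hY q hq)
  rw [insert_eq_of_mem hq] at hu
  have hderiv : ∀ q ∈ u ∩ K ×ˢ I, timeDeriv I Y q = A q (0, 1) := fun q hq =>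
    (hasDerivWithinAt_slice_snd (hA q hq.1) hq.2.1).derivWithin (hI q.2 hq.2.2)
  have hcont : ContinuousWithinAt (fun q => A q (0, 1)) (K ×ˢ I) q :=
    hAc.continuousWithinAt.clm_apply continuousWithinAt_const
  refine hcont.congr_of_eventuallyEq ?_ (hderiv q ⟨mem_of_mem_nhdsWithin hq hu, hq⟩)
  filter_upwards [hu, self_mem_nhdsWithin] with q h₁ h₂ using hderiv q ⟨h₁, h₂⟩

theorem timeDeriv_eq_fderiv_apply (hI : I ∈ 𝓝 t) (hY : DifferentiableAt ℝ Y (x, t)) :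
    timeDeriv I Y (x, t) = fderiv ℝ Y (x, t) (0, 1) :=
  (timeDeriv_eq_deriv hI).trans (hasDerivAt_slice_snd hY).deriv

theorem timeDeriv_eventuallyEq (hI : I ∈ 𝓝 t) (hY : ContDiffAt ℝ 1 Y (x, t)) :
    timeDeriv I Y =ᶠ[𝓝 (x, t)] fun q => fderiv ℝ Y q (0, 1) := by
  filter_upwards [hY.eventually (by simp),
    continuous_snd.continuousAt.eventually (eventually_mem_nhds_iff.2 hI)] with q hq hqI
  exact timeDeriv_eq_fderiv_apply hqI (hq.differentiableAt one_ne_zero)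

theorem contDiffAt_timeDeriv (hI : I ∈ 𝓝 t) (hY : ContDiffAt ℝ 2 Y (x, t)) :
    ContDiffAt ℝ 1 (timeDeriv I Y) (x, t) :=
  ((hY.fderiv_right (m := 1) (by norm_num)).clm_apply contDiffAt_const).congr_of_eventuallyEq
    (timeDeriv_eventuallyEq hI (hY.of_le one_le_two))

theorem hasDerivAt_fderiv_apply_slice_snd (hI : I ∈ 𝓝 t) (hY : ContDiffAt ℝ 2 Y (x, t))
    (w : E × ℝ) :
    HasDerivAt (fun s => fderiv ℝ Y (x, s) w) (fderiv ℝ (timeDeriv I Y) (x, t) w) t := by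
  have hd : DifferentiableAt ℝ (fderiv ℝ Y) (x, t) :=
    (hY.fderiv_right (m := 1) (by norm_num)).differentiableAt one_ne_zero
  have hsymm : IsSymmSndFDerivAt ℝ Y (x, t) := hY.isSymmSndFDerivAt (by simp)
  rw [(timeDeriv_eventuallyEq hI (hY.of_le one_le_two)).fderiv_eq,
    fderiv_clm_apply hd (differentiableAt_const _)]
  have hslice := hasDerivAt_slice_snd (Q := fun q => fderiv ℝ Y q w)
    (hd.clm_apply (differentiableAt_const _))
  rw [fderiv_clm_apply hd (differentiableAt_const _)] at hslice
  simpa [hsymm.eq w (0, 1)] using hslice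

theorem fderiv_timeDeriv_apply_of_transport {S : ℝ → ℝ} {S' : ℝ} (hI : I ∈ 𝓝 t)
    (hY : ContDiffAt ℝ 2 Y (x, t)) (hS : HasDerivAt S S' t)
    (htransport : ∀ᶠ s in 𝓝 t, fderiv ℝ Y (x, s) (h, 1) + p * Y (x, s) = S s) :
    fderiv ℝ (timeDeriv I Y) (x, t) (h, 1) = S' - p * timeDeriv I Y (x, t) := by
  have hd := hY.differentiableAt two_ne_zero
  have hderiv := (hasDerivAt_fderiv_apply_slice_snd hI hY (h, 1)).add
    ((hasDerivAt_slice_snd hd).const_mul p)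
  rw [← timeDeriv_eq_fderiv_apply hI hd] at hderiv
  exact eq_sub_of_add_eq (hderiv.unique (hS.congr_of_eventuallyEq htransport))

variable {a b : ℝ} {S : ℝ → ℝ} (hab : a < b) (hD : IsOpen D)
  (hY : ContDiffOn ℝ 1 Y (D ×ˢ Icc a b)) (hx : x ∈ D)
include hab hD hY hx

theorem fderivWithin_left_apply_add_of_transport (hS : ContinuousOn S (Icc a b))
    (htransport : ∀ t ∈ Ioo a b, fderiv ℝ Y (x, t) (h, 1) + p * Y (x, t) = S t) :
    fderivWithin ℝ Y (D ×ˢ Icc a b) (x, a) (h, 1) + p * Y (x, a) = S a := by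
  have hline : ContinuousOn (fun t : ℝ => (x, t)) (Icc a b) := by fun_prop
  have hmaps : MapsTo (fun t : ℝ => (x, t)) (Icc a b) (D ×ˢ Icc a b) := fun t ht => ⟨hx, ht⟩
  have hY' := hY.continuousOn_fderivWithin (hD.uniqueDiffOn.prod (uniqueDiffOn_Icc hab)) le_rfl
  refine EqOn.of_subset_closure (s := Ioo a b) (fun t ht => ?_)
    (((hY'.comp hline hmaps).clm_apply (continuousOn_const (c := (h, (1 : ℝ))))).add
      ((continuousOn_const (c := p)).mul (hY.continuousOn.comp hline hmaps))) hS
    Ioo_subset_Icc_self (closure_Ioo hab.ne).ge (left_mem_Icc.2 hab.le)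
  have hnhds : D ×ˢ Icc a b ∈ 𝓝 (x, t) :=
    prod_mem_nhds (hD.mem_nhds hx) (Icc_mem_nhds ht.1 ht.2)
  simpa [fderivWithin_of_mem_nhds hnhds] using htransport t ht

theorem fderivWithin_left_apply_eq_timeDeriv (hY0 : ∀ z ∈ D, Y (z, a) = 0) (h : E) :
    fderivWithin ℝ Y (D ×ˢ Icc a b) (x, a) (h, 1) = timeDeriv (Icc a b) Y (x, a) := by
  have ha : a ∈ Icc a b := left_mem_Icc.2 hab.le
  have hfd := (hY.differentiableOn one_ne_zero (x, a) ⟨hx, ha⟩).hasFDerivWithinAt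
  have hspace : HasFDerivAt (fun z => Y (z, a)) _ x := (HasFDerivWithinAt.comp x
    (f := fun z => (z, a)) hfd ((hasFDerivWithinAt_id x D).prodMk (hasFDerivWithinAt_const a x D))
    fun z hz => ⟨hz, ha⟩).hasFDerivAt (hD.mem_nhds hx)
  have hzero := hspace.unique ((hasFDerivAt_const (0 : ℝ) x).congr_of_eventuallyEq
    (eventually_of_mem (hD.mem_nhds hx) hY0))
  have htangential : fderivWithin ℝ Y (D ×ˢ Icc a b) (x, a) (h, 0) = 0 := by
    simpa using congrArg (fun A => A h) hzero
  have htime := (hasDerivWithinAt_slice_snd hfd hx).derivWithin (uniqueDiffOn_Icc hab a ha)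
  have hsplit : (h, (1 : ℝ)) = (h, 0) + (0, 1) := by simp
  rw [timeDeriv, htime, hsplit, map_add, htangential, zero_add]

theorem timeDeriv_left_of_transport (hS : ContinuousOn S (Icc a b))
    (htransport : ∀ t ∈ Ioo a b, fderiv ℝ Y (x, t) (h, 1) + p * Y (x, t) = S t)
    (hY0 : ∀ z ∈ D, Y (z, a) = 0) : timeDeriv (Icc a b) Y (x, a) = S a := by
  have hleft := fderivWithin_left_apply_add_of_transport hab hD hY hx hS htransport
  rwa [hY0 x hx, mul_zero, add_zero, fderivWithin_left_apply_eq_timeDeriv hab hD hY hx hY0]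
    at hleft

end TimeDerivative

/-- The exponentially damped energy density `e^{-Λt} v²`; a large `Λ` absorbs the zeroth order
terms of a transport equation for `v`. -/
def dampedSq {E : Type*} (Λ : ℝ) (v : E × ℝ → ℝ) (q : E × ℝ) : ℝ := Real.exp (-(Λ * q.2)) * v q ^ 2

section DampedSquare

theorem dampedSq_nonneg {E : Type*} (Λ : ℝ) (v : E × ℝ → ℝ) (q : E × ℝ) : 0 ≤ dampedSq Λ v q :=
  mul_nonneg (Real.exp_pos _).le (sq_nonneg _)

theorem continuousOn_dampedSq {E : Type*} [TopologicalSpace E] (Λ : ℝ) {v : E × ℝ → ℝ}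
    {s : Set (E × ℝ)} (hv : ContinuousOn v s) : ContinuousOn (dampedSq Λ v) s :=
  ContinuousOn.mul (by fun_prop) (hv.pow 2)

variable {E : Type*} [NormedAddCommGroup E] [NormedSpace ℝ E] {v : E × ℝ → ℝ} {x h : E} {t : ℝ}

theorem fderiv_dampedSq_apply (Λ : ℝ) (hv : DifferentiableAt ℝ v (x, t)) :
    fderiv ℝ (dampedSq Λ v) (x, t) (h, 1) =
      Real.exp (-(Λ * t)) * (2 * v (x, t) * fderiv ℝ v (x, t) (h, 1) - Λ * v (x, t) ^ 2) := by
  have hweight : HasFDerivAt (fun q : E × ℝ => -(Λ * q.2))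
      (-(Λ • ContinuousLinearMap.snd ℝ E ℝ)) (x, t) := (hasFDerivAt_snd.const_mul Λ).neg
  have hderiv : HasFDerivAt (dampedSq Λ v) _ (x, t) := hweight.exp.mul (hv.hasFDerivAt.pow 2)
  simp [hderiv.fderiv]
  ring

theorem fderiv_dampedSq_apply_le {Λ M κ p S F : ℝ} (hv : DifferentiableAt ℝ v (x, t)) (ht : 0 ≤ t)
    (hp : -M ≤ p) (hΛ0 : 0 ≤ Λ) (hΛ : 1 + 2 * M + κ ≤ Λ) (hS : S ^ 2 ≤ F)
    (htransport : fderiv ℝ v (x, t) (h, 1) = S - p * v (x, t)) :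
    fderiv ℝ (dampedSq Λ v) (x, t) (h, 1) ≤ F - κ * dampedSq Λ v (x, t) := by
  have hexp : Real.exp (-(Λ * t)) ≤ 1 := Real.exp_le_one_iff.2 (neg_nonpos.2 (mul_nonneg hΛ0 ht))
  have hyoung : 2 * v (x, t) * S ≤ S ^ 2 + v (x, t) ^ 2 := by
    linarith [two_mul_le_add_sq S (v (x, t))]
  have hcoeff : (1 - 2 * p + κ - Λ) * v (x, t) ^ 2 ≤ 0 :=
    mul_nonpos_of_nonpos_of_nonneg (by linarith) (sq_nonneg _)
  calc fderiv ℝ (dampedSq Λ v) (x, t) (h, 1)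
      = Real.exp (-(Λ * t)) * (2 * v (x, t) * (S - p * v (x, t)) - Λ * v (x, t) ^ 2) := by
        rw [fderiv_dampedSq_apply Λ hv, htransport]
    _ ≤ Real.exp (-(Λ * t)) * (S ^ 2 - κ * v (x, t) ^ 2) :=
        mul_le_mul_of_nonneg_left (by linarith) (Real.exp_pos _).le
    _ = Real.exp (-(Λ * t)) * S ^ 2 - κ * dampedSq Λ v (x, t) := by rw [dampedSq]; ring
    _ ≤ F - κ * dampedSq Λ v (x, t) :=
        sub_le_sub_right ((mul_le_of_le_one_left (sq_nonneg S) hexp).trans hS) _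

end DampedSquare

section EnergyInequality

variable {d : ℕ} {ρ₁ b Λ : ℝ} {ℓ ℓt : Esp d → ℝ} {H : Esp (d + 1) → Esp (d + 1)}
  {v : Esp (d + 1) × ℝ → ℝ}

theorem inflowIntegral_const_mul (c : ℝ) (w : Esp (d + 1) → ℝ) :
    inflowIntegral d ρ₁ ℓ ℓt H (fun x => c * w x) = c * inflowIntegral d ρ₁ ℓ ℓt H w := by
  simp only [inflowIntegral, mul_assoc, indicator_const_mul, ← mul_add, integral_const_mul]

theorem inflowIntegral_dampedSq_le {t : ℝ} (hΛ0 : 0 ≤ Λ) (ht : 0 ≤ t) :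
    inflowIntegral d ρ₁ ℓ ℓt H (fun x => dampedSq Λ v (x, t)) ≤
      inflowIntegral d ρ₁ ℓ ℓt H fun x => v (x, t) ^ 2 :=
  (inflowIntegral_const_mul _ _).trans_le (mul_le_of_le_one_left
    (inflowIntegral_nonneg fun _ => sq_nonneg _)
    (Real.exp_le_one_iff.2 (neg_nonpos.2 (mul_nonneg hΛ0 ht))))

variable (hℓ : ContDiffOn ℝ 1 ℓ (closedBall 0 ρ₁)) (hℓt : ContDiffOn ℝ 1 ℓt (closedBall 0 ρ₁))
  (hpos : ∀ z, ‖z‖ < ρ₁ → 0 < ℓt z) (hHc : ContinuousOn H (closure (graphDomain d ρ₁ ℓ ℓt)))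
  (hb : 0 ≤ b) (hvc : ContinuousOn v (closure (graphDomain d ρ₁ ℓ ℓt) ×ˢ Icc 0 b))
  (hΛ0 : 0 ≤ Λ)
include hℓ hℓt hpos hHc hb hvc hΛ0

theorem integral_inflowIntegral_dampedSq_le :
    ∫ t in 0..b, inflowIntegral d ρ₁ ℓ ℓt H (fun x => dampedSq Λ v (x, t)) ≤
      ∫ t in 0..b, inflowIntegral d ρ₁ ℓ ℓt H fun x => v (x, t) ^ 2 :=
  intervalIntegral.integral_mono_on hb
    ((continuousOn_inflowIntegral hℓ hℓt hpos hHc isCompact_Icc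
      (continuousOn_dampedSq Λ hvc)).intervalIntegrable_of_Icc hb)
    ((continuousOn_inflowIntegral hℓ hℓt hpos hHc isCompact_Icc
      (hvc.pow 2)).intervalIntegrable_of_Icc hb)
    fun _ ht => inflowIntegral_dampedSq_le hΛ0 ht.1

theorem setIntegral_sq_le_of_transport {M κ N : ℝ} {p F : Esp (d + 1) → ℝ} {S : Esp (d + 1) × ℝ → ℝ}
    (hℓt0 : ∀ z, ‖z‖ = ρ₁ → ℓt z = 0) (hH : ContDiffOn ℝ 1 H (graphDomain d ρ₁ ℓ ℓt))
    (hκ : ∀ x ∈ graphDomain d ρ₁ ℓ ℓt, divergence H x ≤ κ)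
    (hN0 : 0 ≤ N) (hN : ∀ x ∈ closure (graphDomain d ρ₁ ℓ ℓt), ‖H x‖ ≤ N)
    (hp : ∀ x ∈ graphDomain d ρ₁ ℓ ℓt, -M ≤ p x) (hΛ : 1 + 2 * M + κ ≤ Λ)
    (hF : IntegrableOn F (graphDomain d ρ₁ ℓ ℓt))
    (hS : ∀ x ∈ graphDomain d ρ₁ ℓ ℓt, ∀ t ∈ Ioo 0 b, S (x, t) ^ 2 ≤ F x)
    (hv : ∀ x ∈ graphDomain d ρ₁ ℓ ℓt, ∀ t ∈ Ioo 0 b, ContDiffAt ℝ 1 v (x, t))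
    (htransport : ∀ x ∈ graphDomain d ρ₁ ℓ ℓt, ∀ t ∈ Ioo 0 b,
      fderiv ℝ v (x, t) (H x, 1) = S (x, t) - p x * v (x, t)) :
    ∫ x in graphDomain d ρ₁ ℓ ℓt, v (x, b) ^ 2 ≤
      Real.exp (Λ * b) * ((∫ x in graphDomain d ρ₁ ℓ ℓt, v (x, 0) ^ 2) +
        b * (∫ x in graphDomain d ρ₁ ℓ ℓt, F x) +
        N * ∫ t in 0..b, inflowIntegral d ρ₁ ℓ ℓt H fun x => v (x, t) ^ 2) := by
  have hQ : ContDiffOn ℝ 1 (dampedSq Λ v) (graphDomain d ρ₁ ℓ ℓt ×ˢ Ioo 0 b) := fun q hq =>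
    (ContDiffAt.mul (by fun_prop) ((hv q.1 hq.1 q.2 hq.2).pow 2)).contDiffWithinAt
  have henergy := setIntegral_graphDomain_le_of_transport_le hℓ hℓt hℓt0 hpos hHc hb
    (continuousOn_dampedSq Λ hvc) hN
    (fun x _ t _ => dampedSq_nonneg Λ v (x, t)) hH hκ hF hQ fun x hx t ht =>
      fderiv_dampedSq_apply_le ((hv x hx t ht).differentiableAt one_ne_zero) ht.1.le (hp x hx) hΛ0
        hΛ (hS x hx t ht) (htransport x hx t ht)
  have hinflow := mul_le_mul_of_nonneg_left
    (integral_inflowIntegral_dampedSq_le hℓ hℓt hpos hHc hb hvc hΛ0) hN0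
  have hfinal : ∫ x in graphDomain d ρ₁ ℓ ℓt, dampedSq Λ v (x, b) =
      (Real.exp (Λ * b))⁻¹ * ∫ x in graphDomain d ρ₁ ℓ ℓt, v (x, b) ^ 2 := by
    simp only [dampedSq, Real.exp_neg, integral_const_mul]
  have hinitial : ∀ x, dampedSq Λ v (x, 0) = v (x, 0) ^ 2 := fun x => by simp [dampedSq]
  simp only [hinitial, hfinal, sub_zero] at henergy
  exact (inv_mul_le_iff₀ (Real.exp_pos _)).1 (henergy.trans (add_le_add_right hinflow _))

end EnergyInequality

theorem deriv_add_inner_gradient_eq_fderiv_apply {E : Type*} [NormedAddCommGroup E]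
    [InnerProductSpace ℝ E] [CompleteSpace E] {Y : E × ℝ → ℝ} {x : E} {t : ℝ}
    (hY : DifferentiableAt ℝ Y (x, t)) (h : E) :
    deriv (fun s => Y (x, s)) t + ⟪h, gradient (fun z => Y (z, t)) x⟫ =
      fderiv ℝ Y (x, t) (h, 1) := by
  rw [(hasDerivAt_slice_snd hY).deriv, inner_gradient_right, fderiv_slice_fst_apply hY]
  simp [← map_add]

theorem sq_deriv_le_sq_timeDeriv {E : Type*} {I : Set ℝ} {Y : E × ℝ → ℝ} {x : E} {t : ℝ}
    (hI : UniqueDiffWithinAt ℝ I t) :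
    deriv (fun s => Y (x, s)) t ^ 2 ≤ timeDeriv I Y (x, t) ^ 2 := by
  by_cases hY : DifferentiableAt ℝ (fun s => Y (x, s)) t
  · rw [timeDeriv, hY.derivWithin hI]
  · rw [deriv_zero_of_not_differentiableAt hY, zero_pow two_ne_zero]
    exact sq_nonneg _

theorem mul_sq_le_mul_sq_of_abs_le {a b k : ℝ} (h : |a| ≤ k) : (a * b) ^ 2 ≤ k ^ 2 * b ^ 2 := by
  rw [mul_pow]
  exact mul_le_mul_of_nonneg_right (sq_le_sq.2 (h.trans (le_abs_self k))) (sq_nonneg b)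

theorem setIntegral_sq_timeDeriv_left_le {E : Type*} [NormedAddCommGroup E] [NormedSpace ℝ E]
    [MeasurableSpace E] [OpensMeasurableSpace E] {μ : Measure E} {D : Set E} {a b k : ℝ}
    {Y R : E × ℝ → ℝ} {f p : E → ℝ} {H : E → E} (hab : a < b) (hD : IsOpen D)
    (hY : ContDiffOn ℝ 1 Y (D ×ˢ Icc a b))
    (hR : ∀ x ∈ D, ContinuousOn (fun t => R (x, t)) (Icc a b)) (hk : ∀ x ∈ D, |R (x, a)| ≤ k)
    (hf : IntegrableOn (fun x => f x ^ 2) D μ)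
    (htransport : ∀ x ∈ D, ∀ t ∈ Ioo a b,
      fderiv ℝ Y (x, t) (H x, 1) + p x * Y (x, t) = R (x, t) * f x)
    (hY0 : ∀ x ∈ D, Y (x, a) = 0) :
    ∫ x in D, timeDeriv (Icc a b) Y (x, a) ^ 2 ∂μ ≤ k ^ 2 * ∫ x in D, f x ^ 2 ∂μ := by
  rw [← integral_const_mul]
  refine integral_mono_of_nonneg (ae_of_all _ fun _ => sq_nonneg _) (hf.const_mul _)
    ((ae_restrict_iff' hD.measurableSet).2 (ae_of_all _ fun x hx => ?_))
  simp only [timeDeriv_left_of_transport hab hD hY hx ((hR x hx).mul_const _)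
    (htransport x hx) hY0]
  exact mul_sq_le_mul_sq_of_abs_le (hk x hx)

theorem sqrt_add_le_add_sqrt {a b : ℝ} (ha : 0 ≤ a) (hb : 0 ≤ b) : √(a + b) ≤ √a + √b := by
  simpa only [Real.sqrt_eq_rpow] using
    Real.rpow_add_le_add_rpow ha hb (by norm_num : (0 : ℝ) ≤ 1 / 2) (by norm_num)

theorem sqrt_le_sqrt_add_mul_add_sqrt {A B X a b : ℝ} (hA : 0 ≤ A) (hB : 0 ≤ B) (ha : 0 ≤ a)
    (hb : 0 ≤ b) (hX : X ≤ A * a + B * b) : √X ≤ √(A + B) * (√a + √b) :=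
  calc √X ≤ √((A + B) * (a + b)) :=
        Real.sqrt_le_sqrt (by linarith [mul_nonneg hA hb, mul_nonneg hB ha])
    _ = √(A + B) * √(a + b) := Real.sqrt_mul (add_nonneg hA hB) _
    _ ≤ √(A + B) * (√a + √b) :=
        mul_le_mul_of_nonneg_left (sqrt_add_le_add_sqrt ha hb) (Real.sqrt_nonneg _)

section TransportSolution

variable {d : ℕ} {ρ₁ T : ℝ} {ℓ ℓt : Esp d → ℝ} {H : Esp (d + 1) → Esp (d + 1)}
  {Y : Esp (d + 1) × ℝ → ℝ} (hℓ : ContDiffOn ℝ 1 ℓ (closedBall 0 ρ₁))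
  (hℓt : ContDiffOn ℝ 1 ℓt (closedBall 0 ρ₁)) (hpos : ∀ z, ‖z‖ < ρ₁ → 0 < ℓt z)
  (hHc : ContinuousOn H (closure (graphDomain d ρ₁ ℓ ℓt))) (hT : 0 < T)
  (hY : ContDiffOn ℝ 1 Y (closure (graphDomain d ρ₁ ℓ ℓt) ×ˢ Icc 0 T))
  {t₀ : ℝ} (ht₀ : t₀ ∈ Icc 0 T)
include hℓ hℓt hT hY ht₀

theorem setIntegral_sq_deriv_le_setIntegral_sq_timeDeriv :
    ∫ x in graphDomain d ρ₁ ℓ ℓt, deriv (fun t => Y (x, t)) t₀ ^ 2 ≤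
      ∫ x in graphDomain d ρ₁ ℓ ℓt, timeDeriv (Icc 0 T) Y (x, t₀) ^ 2 :=
  integral_mono_of_nonneg (ae_of_all _ fun _ => sq_nonneg _)
    (((continuousOn_slice_fst (continuousOn_timeDeriv (uniqueDiffOn_Icc hT) hY) ht₀).pow
      2 |>.integrableOn_compact
        (isCompact_closure_graphDomain hℓ.continuousOn hℓt.continuousOn)).mono_set subset_closure)
    (ae_of_all _ fun _ => sq_deriv_le_sq_timeDeriv (uniqueDiffOn_Icc hT t₀ ht₀))

include hpos hHc

theorem integral_inflowIntegral_sq_timeDeriv_le :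
    ∫ t in 0..t₀, inflowIntegral d ρ₁ ℓ ℓt H (fun x => timeDeriv (Icc 0 T) Y (x, t) ^ 2) ≤
      ∫ t in Ioo 0 T, inflowIntegral d ρ₁ ℓ ℓt H fun x => deriv (fun s => Y (x, s)) t ^ 2 := by
  have hcont := continuousOn_inflowIntegral hℓ hℓt hpos hHc isCompact_Icc
    ((continuousOn_timeDeriv (uniqueDiffOn_Icc hT) hY).pow 2)
  have hinterior : ∫ t in Ioo 0 T, inflowIntegral d ρ₁ ℓ ℓt H
        (fun x => deriv (fun s => Y (x, s)) t ^ 2) =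
      ∫ t in Ioo 0 T, inflowIntegral d ρ₁ ℓ ℓt H fun x => timeDeriv (Icc 0 T) Y (x, t) ^ 2 :=
    setIntegral_congr_fun measurableSet_Ioo fun t ht => by
      simp only [timeDeriv_eq_deriv (Icc_mem_nhds ht.1 ht.2)]
  rw [hinterior, ← integral_Ioc_eq_integral_Ioo, ← intervalIntegral.integral_of_le hT.le]
  exact intervalIntegral.integral_mono_interval le_rfl ht₀.1 ht₀.2
    (ae_of_all _ fun t => inflowIntegral_nonneg fun _ => sq_nonneg _)
    (hcont.intervalIntegrable_of_Icc hT.le)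

variable {M κ N Λ k₀ k₁ : ℝ} {R : Esp (d + 1) × ℝ → ℝ}
  {f p : Esp (d + 1) → ℝ} (hℓt0 : ∀ z, ‖z‖ = ρ₁ → ℓt z = 0)
  (hH : ContDiffOn ℝ 1 H (graphDomain d ρ₁ ℓ ℓt))
  (hκ : ∀ x ∈ graphDomain d ρ₁ ℓ ℓt, divergence H x ≤ κ)
  (hN0 : 0 ≤ N) (hN : ∀ x ∈ closure (graphDomain d ρ₁ ℓ ℓt), ‖H x‖ ≤ N)
  (hp : ∀ x ∈ graphDomain d ρ₁ ℓ ℓt, -M ≤ p x) (hΛ0 : 0 ≤ Λ) (hΛ : 1 + 2 * M + κ ≤ Λ)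
  (hR : ∀ x ∈ graphDomain d ρ₁ ℓ ℓt, DifferentiableOn ℝ (fun t => R (x, t)) (Icc 0 T))
  (hk₀ : ∀ x ∈ graphDomain d ρ₁ ℓ ℓt, |R (x, 0)| ≤ k₀)
  (hk₁ : ∀ x ∈ graphDomain d ρ₁ ℓ ℓt, ∀ t ∈ Ioo 0 T, |timeDeriv (Icc 0 T) R (x, t)| ≤ k₁)
  (hf : IntegrableOn (fun x => f x ^ 2) (graphDomain d ρ₁ ℓ ℓt))
  (hY2 : ContDiffOn ℝ 2 Y (graphDomain d ρ₁ ℓ ℓt ×ˢ Ioo 0 T))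
  (htransport : ∀ x ∈ graphDomain d ρ₁ ℓ ℓt, ∀ t ∈ Ioo 0 T,
    fderiv ℝ Y (x, t) (H x, 1) + p x * Y (x, t) = R (x, t) * f x)
  (hY0 : ∀ x ∈ graphDomain d ρ₁ ℓ ℓt, Y (x, 0) = 0)
include hℓt0 hH hκ hN0 hN hp hΛ0 hΛ hR hk₀ hk₁ hf hY2 htransport hY0

theorem setIntegral_sq_timeDeriv_le :
    ∫ x in graphDomain d ρ₁ ℓ ℓt, timeDeriv (Icc 0 T) Y (x, t₀) ^ 2 ≤
      Real.exp (Λ * t₀) * ((k₀ ^ 2 + t₀ * k₁ ^ 2) * (∫ x in graphDomain d ρ₁ ℓ ℓt, f x ^ 2) +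
        N * ∫ t in 0..t₀,
          inflowIntegral d ρ₁ ℓ ℓt H fun x => timeDeriv (Icc 0 T) Y (x, t) ^ 2) := by
  have hD := isOpen_graphDomain hℓ.continuousOn hℓt.continuousOn
  have hvc := continuousOn_timeDeriv (uniqueDiffOn_Icc hT) hY
  have hI : ∀ t ∈ Ioo 0 t₀, Icc 0 T ∈ 𝓝 t := fun t ht => Icc_mem_nhds ht.1 (ht.2.trans_le ht₀.2)
  have hYat : ∀ x ∈ graphDomain d ρ₁ ℓ ℓt, ∀ t ∈ Ioo 0 t₀, ContDiffAt ℝ 2 Y (x, t) :=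
    fun x hx t ht => hY2.contDiffAt
      ((hD.prod isOpen_Ioo).mem_nhds ⟨hx, Ioo_subset_Ioo_right ht₀.2 ht⟩)
  have henergy := setIntegral_sq_le_of_transport (v := timeDeriv (Icc 0 T) Y) hℓ hℓt hpos hHc ht₀.1
    (S := fun q => timeDeriv (Icc 0 T) R q * f q.1)
    (hvc.mono (prod_mono subset_rfl (Icc_subset_Icc_right ht₀.2))) hΛ0 hℓt0 hH hκ hN0 hN hp hΛ
    (hf.const_mul (k₁ ^ 2))
    (fun x hx t ht => mul_sq_le_mul_sq_of_abs_le (hk₁ x hx t (Ioo_subset_Ioo_right ht₀.2 ht)))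
    (fun x hx t ht => contDiffAt_timeDeriv (hI t ht) (hYat x hx t ht))
    (fun x hx t ht => fderiv_timeDeriv_apply_of_transport (hI t ht) (hYat x hx t ht)
      (((hR x hx t (mem_of_mem_nhds (hI t ht))).hasDerivWithinAt.hasDerivAt (hI t ht)).mul_const _)
      (eventually_of_mem (isOpen_Ioo.mem_nhds (Ioo_subset_Ioo_right ht₀.2 ht)) (htransport x hx)))
  have hinitial := setIntegral_sq_timeDeriv_left_le (μ := volume) hT hD
    (hY.mono (prod_mono subset_closure subset_rfl)) (fun x hx => (hR x hx).continuousOn) hk₀ hf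
    htransport hY0
  rw [integral_const_mul] at henergy
  refine henergy.trans (mul_le_mul_of_nonneg_left ?_ (Real.exp_pos _).le)
  linarith

theorem setIntegral_sq_deriv_le :
    ∫ x in graphDomain d ρ₁ ℓ ℓt, deriv (fun t => Y (x, t)) t₀ ^ 2 ≤
      Real.exp (Λ * T) * (k₀ ^ 2 + T * k₁ ^ 2) * (∫ x in graphDomain d ρ₁ ℓ ℓt, f x ^ 2) +
        Real.exp (Λ * T) * N * ∫ t in Ioo 0 T,
          inflowIntegral d ρ₁ ℓ ℓt H fun x => deriv (fun s => Y (x, s)) t ^ 2 := by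
  have hI0 : 0 ≤ ∫ t in Ioo 0 T,
      inflowIntegral d ρ₁ ℓ ℓt H fun x => deriv (fun s => Y (x, s)) t ^ 2 :=
    integral_nonneg fun _ => inflowIntegral_nonneg fun _ => sq_nonneg _
  have hinflow := integral_inflowIntegral_sq_timeDeriv_le hℓ hℓt hpos hHc hT hY ht₀
  refine (setIntegral_sq_deriv_le_setIntegral_sq_timeDeriv hℓ hℓt hT hY ht₀).trans
    ((setIntegral_sq_timeDeriv_le hℓ hℓt hpos hHc hT hY ht₀ hℓt0 hH hκ hN0 hN hp hΛ0 hΛ hR hk₀ hk₁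
      hf hY2 htransport hY0).trans ?_)
  rw [mul_assoc, mul_assoc, ← mul_add]
  refine mul_le_mul_of_nonneg ?_ ?_ (Real.exp_pos _).le (by positivity)
  · exact Real.exp_le_exp.2 (mul_le_mul_of_nonneg_left ht₀.2 hΛ0)
  · gcongr
    exact ht₀.2

end TransportSolution

theorem lemma3_energy_estimate_general {d : ℕ} {T M κ ρ₁ : ℝ} (hT : 0 < T) {ℓ ℓt : Esp d → ℝ}
    (hℓ : ContDiffOn ℝ 1 ℓ (closedBall 0 ρ₁)) (hℓt : ContDiffOn ℝ 1 ℓt (closedBall 0 ρ₁))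
    (hpos : ∀ z, ‖z‖ < ρ₁ → 0 < ℓt z) (hℓt0 : ∀ z, ‖z‖ = ρ₁ → ℓt z = 0)
    {R : Esp (d + 1) → ℝ → ℝ}
    (hR : ContDiffOn ℝ 1 (fun q : Esp (d + 1) × ℝ => R q.1 q.2)
      (closure (graphDomain d ρ₁ ℓ ℓt) ×ˢ Icc 0 T))
    {H : Esp (d + 1) → Esp (d + 1)} (hHc : ContinuousOn H (closure (graphDomain d ρ₁ ℓ ℓt)))
    (hH : ContDiffOn ℝ 1 H (graphDomain d ρ₁ ℓ ℓt))
    (hκ : ∀ x ∈ graphDomain d ρ₁ ℓ ℓt, divergence H x ≤ κ)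
    {p : Esp (d + 1) → ℝ} (hp : ∀ x ∈ graphDomain d ρ₁ ℓ ℓt, -M ≤ p x) :
    ∃ C > 0, ∀ (f : Esp (d + 1) → ℝ) (y : Esp (d + 1) → ℝ → ℝ),
      IntegrableOn (fun x => f x ^ 2) (graphDomain d ρ₁ ℓ ℓt) →
      ContDiffOn ℝ 1 (fun q : Esp (d + 1) × ℝ => y q.1 q.2)
        (closure (graphDomain d ρ₁ ℓ ℓt) ×ˢ Icc 0 T) →
      ContDiffOn ℝ 2 (fun q : Esp (d + 1) × ℝ => y q.1 q.2) (graphDomain d ρ₁ ℓ ℓt ×ˢ Ioo 0 T) →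
      (∀ x ∈ graphDomain d ρ₁ ℓ ℓt, ∀ t ∈ Ioo 0 T,
        deriv (y x) t + ⟪H x, gradient (fun z => y z t) x⟫ + p x * y x t = R x t * f x) →
      (∀ x ∈ graphDomain d ρ₁ ℓ ℓt, y x 0 = 0) →
      ∀ t₀ ∈ Icc 0 T,
        √(∫ x in graphDomain d ρ₁ ℓ ℓt, deriv (y x) t₀ ^ 2) ≤
          C * (√(∫ x in graphDomain d ρ₁ ℓ ℓt, f x ^ 2) +
            √(∫ t in Ioo 0 T, inflowIntegral d ρ₁ ℓ ℓt H fun x => deriv (y x) t ^ 2)) := by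
  have hD := isOpen_graphDomain hℓ.continuousOn hℓt.continuousOn
  have hK := isCompact_closure_graphDomain hℓ.continuousOn hℓt.continuousOn
  obtain ⟨N, hN⟩ := hK.exists_bound_of_continuousOn hHc
  obtain ⟨k₀, hk₀⟩ := (hK.prod isCompact_Icc).exists_bound_of_continuousOn hR.continuousOn
  obtain ⟨k₁, hk₁⟩ := (hK.prod isCompact_Icc).exists_bound_of_continuousOn
    (continuousOn_timeDeriv (uniqueDiffOn_Icc hT) hR)
  set Λ := max 0 (1 + 2 * M + κ)
  have hN0 : 0 < max N 1 := lt_max_of_lt_right one_pos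
  have hA : 0 ≤ Real.exp (Λ * T) * (k₀ ^ 2 + T * k₁ ^ 2) := by positivity
  have hB : 0 < Real.exp (Λ * T) * max N 1 := by positivity
  refine ⟨√(_ + _), Real.sqrt_pos.2 (add_pos_of_nonneg_of_pos hA hB),
    fun f y hf hy hy2 hpde hy0 t₀ ht₀ => ?_⟩
  have htransport : ∀ x ∈ graphDomain d ρ₁ ℓ ℓt, ∀ t ∈ Ioo 0 T,
      fderiv ℝ (fun q : Esp (d + 1) × ℝ => y q.1 q.2) (x, t) (H x, 1) + p x * y x t = R x t * f x :=
    fun x hx t ht => by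
      rw [← hpde x hx t ht, ← deriv_add_inner_gradient_eq_fderiv_apply ((hy2.differentiableOn
        two_ne_zero).differentiableAt ((hD.prod isOpen_Ioo).mem_nhds ⟨hx, ht⟩))]
  exact sqrt_le_sqrt_add_mul_add_sqrt hA hB.le (integral_nonneg fun _ => sq_nonneg _)
    (integral_nonneg fun _ => inflowIntegral_nonneg fun _ => sq_nonneg _)
    (setIntegral_sq_deriv_le hℓ hℓt hpos hHc hT hy ht₀ hℓt0 hH hκ hN0.le
      (fun x hx => (hN x hx).trans (le_max_left N 1)) hp (le_max_left _ _) (le_max_right _ _)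
      (fun x hx => differentiableOn_slice_snd (hR.differentiableOn one_ne_zero)
        (subset_closure hx))
      (fun x hx => hk₀ _ ⟨subset_closure hx, left_mem_Icc.2 hT.le⟩)
      (fun x hx t ht => hk₁ _ ⟨subset_closure hx, Ioo_subset_Icc_self ht⟩) hf hy2 htransport hy0)

/-- **Lemma 3** (energy estimate). -/
theorem lemma3_energy_estimate
    (d : ℕ) (hd : 1 ≤ d) (T M δ₀ ρ₁ : ℝ)
    (hT : 0 < T) (hM : 0 < M) (hδ₀ : 0 < δ₀) (hρ₁ : 0 < ρ₁)
    (ℓ ℓt : Esp d → ℝ)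
    (hℓ : ContDiffOn ℝ 2 ℓ (closedBall 0 ρ₁))
    (hℓt : ContDiffOn ℝ 2 ℓt (closedBall 0 ρ₁))
    (hℓtpos : ∀ x' : Esp d, ‖x'‖ < ρ₁ → 0 < ℓt x')
    (hℓt0 : ∀ x' : Esp d, ‖x'‖ = ρ₁ → ℓt x' = 0)
    (R : Esp (d+1) → ℝ → ℝ)
    (hR : ContDiffOn ℝ 2 (fun q : Esp (d+1) × ℝ => R q.1 q.2)
      (closure (graphDomain d ρ₁ ℓ ℓt) ×ˢ Icc 0 T))
    (H : Esp (d+1) → Esp (d+1))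
    (hH : IsAdmissible M δ₀ (closure (graphDomain d ρ₁ ℓ ℓt)) H)
    (p₁ : Esp (d+1) → ℝ) (hp₁ : ContinuousOn p₁ (closure (graphDomain d ρ₁ ℓ ℓt)))
    (hp₁b : ∀ x ∈ closure (graphDomain d ρ₁ ℓ ℓt), |p₁ x| ≤ M)
 :
    ∃ C > (0:ℝ),
      ∀ (f : Esp (d+1) → ℝ) (y : Esp (d+1) → ℝ → ℝ),
        ContinuousOn f (closure (graphDomain d ρ₁ ℓ ℓt)) →
        ContDiffOn ℝ 2 (fun q : Esp (d+1) × ℝ => y q.1 q.2)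
          (closure (graphDomain d ρ₁ ℓ ℓt) ×ˢ Icc 0 T) →
        (∀ x ∈ graphDomain d ρ₁ ℓ ℓt, ∀ t ∈ Ioo (0:ℝ) T,
          deriv (y x) t + ⟪H x, gradient (fun z => y z t) x⟫ + p₁ x * y x t
            = R x t * f x) →
        (∀ x ∈ graphDomain d ρ₁ ℓ ℓt, y x 0 = 0) →
        ∀ t₀ ∈ Icc (0:ℝ) T,
        Real.sqrt (∫ x in graphDomain d ρ₁ ℓ ℓt, (deriv (y x) t₀) ^ 2)
        ≤ C * (Real.sqrt (∫ x in graphDomain d ρ₁ ℓ ℓt, (f x) ^ 2)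
          + Real.sqrt (∫ t in Ioo 0 T, ∫ x' in ball (0 : Esp d) ρ₁,
              ({z' : Esp d | ⟪H (graphMk d z' (ℓ z')), nuUp d ℓ z'⟫ ≤ 0}.indicator
                  (fun z' =>
                    (deriv (y (graphMk d z' (ℓ z'))) t) ^ 2 * omegaW d ℓ z') x'
                + {z' : Esp d |
                    ⟪H (graphMk d z' (ℓ z' - ℓt z')), nuDown d (fun z => ℓ z - ℓt z) z'⟫
                      ≤ 0}.indicator
                  (fun z' =>
                    (deriv (y (graphMk d z' (ℓ z' - ℓt z'))) t) ^ 2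
                      * omegaW d (fun z => ℓ z - ℓt z) z') x'))) := by
  have hK := isCompact_closure_graphDomain hℓ.continuousOn hℓt.continuousOn
  obtain ⟨U, -, -, hKU, hHU, -, hDH, -⟩ := hH
  have hDU : graphDomain d ρ₁ ℓ ℓt ⊆ U := subset_closure.trans hKU
  obtain ⟨C, hC, hestimate⟩ := lemma3_energy_estimate_general hT (hℓ.of_le one_le_two)
    (hℓt.of_le one_le_two) hℓtpos hℓt0 (hR.of_le one_le_two) (hHU.continuousOn.mono hKU)
    (hHU.mono hDU)
    (fun x hx => (divergence_le_finrank_mul_norm_fderiv H x).trans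
      (mul_le_mul_of_nonneg_left (hDH x (hDU hx)) (Nat.cast_nonneg _)))
    fun x hx => (abs_le.1 (hp₁b x (subset_closure hx))).1
  exact ⟨C, hC, fun f y hf hy => hestimate f y
    (((hf.pow 2).integrableOn_compact hK).mono_set subset_closure) (hy.of_le one_le_two)
    (hy.mono (prod_mono subset_closure Ioo_subset_Icc_self))⟩
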